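/- Let G be a graph with minimum degree at least 2 and at most three vertices of degree 2, and suppose G contains no cycle of length divisible by 3 and no two degree-2 vertices that are adjacent or share both neighbors. If G is 2-connected, then G contains a cycle of length divisible by 3 — i.e., every 2-connected graph without a (0 mod 3)-cycle contains either two adjacent degree-2 vertices or two degree-2 vertices with the same neighborhood. -/

import Mathlib

namespace Gau
open scoped Classical

set_option linter.unusedSectionVars false
set_option linter.unusedVariables false

section
variable {V : Type*} [Fintype V] [DecidableEq V]

/-- `Pa f a b U s`: a path from `a` to `b` with vertex set `U` and label sum `s`
in the labelled graph `f` (where `f u v = 0` means that `u`, `v` are not adjacent). -/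
inductive Pa (f : V → V → ZMod 3) : V → V → Finset V → ZMod 3 → Prop
  | one (a : V) : Pa f a a {a} 0
  | cons {a b c : V} {U : Finset V} {s : ZMod 3} (h : f a b ≠ 0) (hU : a ∉ U)
      (p : Pa f b c U s) : Pa f a c (insert a U) (f a b + s)

variable {f g : V → V → ZMod 3}

theorem Pa.start_mem {a b : V} {U : Finset V} {s : ZMod 3} (h : Pa f a b U s) : a ∈ U := by
  cases h <;> simp

theorem Pa.end_mem {a b : V} {U : Finset V} {s : ZMod 3} (h : Pa f a b U s) : b ∈ U := by
  induction h <;> simp_all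

theorem Pa.congr {a b : V} {U : Finset V} {s : ZMod 3} (h : Pa f a b U s)
    (hfg : ∀ p ∈ U, ∀ q ∈ U, f p q ≠ 0 → f p q = g p q) : Pa g a b U s := by
  induction h with
  | one a => exact Pa.one a
  | @cons a b c U s h hU p ih =>
    have e := hfg a (by simp) b (by simp [p.start_mem]) h
    rw [e]
    refine Pa.cons (e ▸ h) hU (ih ?_)
    intro p hp q hq
    exact hfg p (by simp [hp]) q (by simp [hq])

theorem Pa.append {a b c d : V} {U W : Finset V} {s r : ZMod 3} (h : Pa f a b U s)
    (hbc : f b c ≠ 0) (h2 : Pa f c d W r) (hd : Disjoint U W) :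
    Pa f a d (U ∪ W) (s + f b c + r) := by
  induction h with
  | one a =>
    have := Pa.cons hbc (by simpa using hd) h2
    rw [Finset.insert_eq] at this
    rwa [zero_add]
  | @cons a b c U s h hU p ih =>
    rw [Finset.disjoint_insert_left] at hd
    have := Pa.cons h (by simp [hU, hd.1]) (ih hbc hd.2)
    rw [Finset.insert_union]
    convert this using 1
    ring

theorem Pa.snoc {a b c : V} {U : Finset V} {s : ZMod 3} (h : Pa f a b U s)
    (hbc : f b c ≠ 0) (hc : c ∉ U) : Pa f a c (insert c U) (s + f b c) := by
  have := h.append hbc (Pa.one c) (by simpa using hc)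
  rw [add_zero, Finset.union_comm] at this
  rwa [Finset.insert_eq]

theorem Pa.rev (hs : ∀ u v, f u v = f v u) {a b : V} {U : Finset V} {s : ZMod 3}
    (h : Pa f a b U s) : Pa f b a U s := by
  induction h with
  | one a => exact Pa.one a
  | @cons a b c U s h hU p ih =>
    have := ih.snoc (c := a) (by rwa [hs]) hU
    convert this using 1
    rw [hs a b]; ring

theorem Pa.uncons {a b : V} {U : Finset V} {s : ZMod 3} (h : Pa f a b U s) :
    (a = b ∧ U = {a} ∧ s = 0) ∨ ∃ c W r, f a c ≠ 0 ∧ a ∉ W ∧ Pa f c b W r ∧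
      U = insert a W ∧ s = f a c + r := by
  cases h with
  | one => left; simp
  | cons h hU p => right; exact ⟨_, _, _, h, hU, p, rfl, rfl⟩

theorem Pa.unsnoc (hs : ∀ u v, f u v = f v u) {a b : V} {U : Finset V} {s : ZMod 3}
    (h : Pa f a b U s) :
    (a = b ∧ U = {a} ∧ s = 0) ∨ ∃ c W r, f c b ≠ 0 ∧ b ∉ W ∧ Pa f a c W r ∧
      U = insert b W ∧ s = r + f c b := by
  rcases (h.rev hs).uncons with ⟨h1, h2, h3⟩ | ⟨c, W, r, h1, h2, h3, h4, h5⟩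
  · left; subst h1; exact ⟨rfl, h2, h3⟩
  · right; refine ⟨c, W, r, by rwa [hs], h2, h3.rev hs, h4, ?_⟩
    rw [h5, hs b c]; ring

theorem Pa.split {a b w : V} {U : Finset V} {s : ZMod 3} (h : Pa f a b U s) (hw : w ∈ U) :
    ∃ U1 U2 s1 s2, Pa f a w U1 s1 ∧ Pa f w b U2 s2 ∧ U = U1 ∪ U2 ∧
      (∀ p ∈ U1, p ∈ U2 → p = w) ∧ s = s1 + s2 := by
  induction h with
  | one a =>
    have : w = a := by simpa using hw
    subst this
    exact ⟨{w}, {w}, 0, 0, Pa.one _, Pa.one _, by simp, by simp, by simp⟩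
  | @cons a b c U s h hU p ih =>
    by_cases hwa : w = a
    · subst hwa
      refine ⟨{w}, insert w U, 0, _, Pa.one _, Pa.cons h hU p, by simp, by simp, by simp⟩
    · have hw' : w ∈ U := by simpa [hwa] using hw
      obtain ⟨U1, U2, s1, s2, h1, h2, h3, h4, h5⟩ := ih hw'
      refine ⟨insert a U1, U2, _, s2, Pa.cons h ?_ h1, h2, ?_, ?_, ?_⟩
      · intro h; exact hU (by simp [h3, h])
      · rw [h3, Finset.insert_union]
      · intro p hp hp2
        rcases Finset.mem_insert.1 hp with rfl | hp
        · exact absurd (by simp [h3, hp2]) hU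
        · exact h4 p hp hp2
      · rw [h5]; ring

theorem Pa.sup (hs : ∀ u v, f u v = f v u) {a b : V} {U : Finset V} {s : ZMod 3}
    (h : Pa f a b U s) : a = b ∨ ∀ p ∈ U, ∃ q, f p q ≠ 0 := by
  induction h with
  | one a => left; rfl
  | @cons a b c U s h hU p ih =>
    right
    intro r hr
    rcases Finset.mem_insert.1 hr with rfl | hr
    · exact ⟨_, h⟩
    · rcases ih with rfl | ih
      · rcases p.uncons with ⟨_, rfl, _⟩ | ⟨c, W, r, h1, h2, h3, h4, h5⟩
        · have : r = b := by simpa using hr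
          subst this
          exact ⟨a, by rwa [hs]⟩
        · subst h4; exact absurd h3.end_mem h2
      · exact ih r hr

/-- A zero cycle with base vertex `v`. -/
def ZB (f : V → V → ZMod 3) (v : V) (W : Finset V) : Prop :=
  ∃ a b s, Pa f a b W s ∧ v ∉ W ∧ a ≠ b ∧ f v a ≠ 0 ∧ f b v ≠ 0 ∧ f v a + s + f b v = 0

/-- There is no zero cycle. -/
def NZ (f : V → V → ZMod 3) : Prop := ∀ v W, ¬ ZB f v W

theorem ZB.rotate (hs : ∀ u v, f u v = f v u) {v w : V} {U : Finset V} (h : ZB f v U)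
    (hw : w ∈ U) : ∃ W, ZB f w W := by
  obtain ⟨a, b, s, hp, hv, hab, hva, hbv, h0⟩ := h
  obtain ⟨U1, U2, s1, s2, p1, p2, rfl, hd, rfl⟩ := hp.split hw
  simp only [Finset.mem_union, not_or] at hv
  rcases p1.unsnoc hs with ⟨rfl, rfl, rfl⟩ | ⟨a', W1, r1, e1, n1, q1, rfl, rfl⟩
  · rcases p2.uncons with ⟨rfl, _, _⟩ | ⟨c, W2, r2, e2, n2, q2, rfl, rfl⟩
    · exact absurd rfl hab
    · have hv2 : v ∉ W2 := fun h => hv.2 (by simp [h])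
      refine ⟨_, c, v, _, q2.snoc hbv hv2, ?_, ?_, e2, hva, ?_⟩
      · simp [n2]; rintro rfl; exact hv.1 (by simp)
      · rintro rfl; exact hv2 q2.start_mem
      · linear_combination h0
  · rcases p2.uncons with ⟨rfl, _, rfl⟩ | ⟨c, W2, r2, e2, n2, q2, rfl, rfl⟩
    · have hv1 : v ∉ W1 := fun h => hv.1 (by simp [h])
      refine ⟨_, v, a', _, Pa.cons hva hv1 q1, ?_, ?_, hbv, e1, ?_⟩
      · simp [n1]; rintro rfl; exact hv.1 (by simp)
      · rintro rfl; exact hv1 q1.end_mem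
      · linear_combination h0
    · have hv1 : v ∉ W1 := fun h => hv.1 (by simp [h])
      have hv2 : v ∉ W2 := fun h => hv.2 (by simp [h])
      have hdis : Disjoint W2 W1 := by
        rw [Finset.disjoint_left]
        intro p h2 h1
        have := hd p (by simp [h1]) (by simp [h2])
        subst this; exact n1 h1
      refine ⟨_, c, a', _, (q2.snoc hbv hv2).append hva q1 ?_, ?_, ?_, e2, e1, ?_⟩
      · rw [Finset.disjoint_insert_left]; exact ⟨hv1, hdis⟩
      · simp [n1, n2]; rintro rfl; exact hv.1 (by simp)
      · rintro rfl; exact (Finset.disjoint_left.1 hdis) q2.start_mem q1.end_mem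
      · linear_combination h0

/-- To exclude zero cycles it suffices to exclude those avoiding `w` and those based at `w`. -/
theorem NZ.of_vertex (hs : ∀ u v, f u v = f v u) (w : V)
    (h1 : ∀ v W, w ≠ v → w ∉ W → ¬ ZB f v W) (h2 : ∀ W, ¬ ZB f w W) : NZ f := by
  intro v W h
  by_cases hw : w = v
  · subst hw; exact h2 _ h
  by_cases hW : w ∈ W
  · obtain ⟨W', h'⟩ := h.rotate hs hW
    exact h2 _ h'
  · exact h1 v W hw hW h

theorem ZB.congr (hs : ∀ u v, f u v = f v u) (hgs : ∀ u v, g u v = g v u)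
    {v : V} {W : Finset V} (h : ZB f v W)
    (hfg : ∀ p ∈ insert v W, ∀ q ∈ insert v W, f p q ≠ 0 → f p q = g p q) : ZB g v W := by
  obtain ⟨a, b, s, hp, hv, hab, hva, hbv, h0⟩ := h
  have e1 := hfg v (by simp) a (by simp [hp.start_mem]) hva
  have e2 := hfg b (by simp [hp.end_mem]) v (by simp) hbv
  refine ⟨a, b, s, hp.congr ?_, hv, hab, e1 ▸ hva, e2 ▸ hbv, by rw [← e1, ← e2]; exact h0⟩
  intro p hp q hq; exact hfg p (by simp [hp]) q (by simp [hq])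

theorem ZB.sup (hs : ∀ u v, f u v = f v u) {v : V} {W : Finset V} (h : ZB f v W) :
    ∀ p ∈ insert v W, ∃ q, f p q ≠ 0 := by
  obtain ⟨a, b, s, hp, hv, hab, hva, hbv, h0⟩ := h
  intro p h
  rcases Finset.mem_insert.1 h with rfl | h
  · exact ⟨_, hva⟩
  · rcases hp.sup hs with h' | h'
    · exact absurd h' hab
    · exact h' p h

/-- Removing edges keeps the property of having no zero cycle. -/
theorem NZ.mono (h : NZ f) (hs : ∀ u v, f u v = f v u) (hgs : ∀ u v, g u v = g v u)
    (hg : ∀ u v, g u v ≠ 0 → g u v = f u v) : NZ g := by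
  intro v W hz
  exact h v W (hz.congr hgs hs (fun p _ q _ => hg p q))

theorem NZ.c3 (h : NZ f) {a b c : V} (hab : f a b ≠ 0) (hbc : f b c ≠ 0) (hca : f c a ≠ 0)
    (h1 : a ≠ b) (h2 : b ≠ c) (h3 : a ≠ c) : f a b + f b c + f c a ≠ 0 := by
  intro h0
  refine h a _ ⟨b, c, _, Pa.cons hbc ?_ (Pa.one c), ?_, h2, hab, hca, ?_⟩
  · simpa using h2
  · simp [h1, h3]
  · linear_combination h0

theorem NZ.c4 (h : NZ f) {a b c d : V} (hab : f a b ≠ 0) (hbc : f b c ≠ 0) (hcd : f c d ≠ 0)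
    (hda : f d a ≠ 0) (hn : [a, b, c, d].Nodup) : f a b + f b c + f c d + f d a ≠ 0 := by
  intro h0
  simp only [List.nodup_cons, List.mem_cons, List.not_mem_nil, or_false, not_or] at hn
  refine h a _ ⟨b, d, _, Pa.cons hbc ?_ (Pa.cons hcd ?_ (Pa.one d)), ?_, ?_, hab, hda, ?_⟩
  · simp; tauto
  · simp; tauto
  · simp; tauto
  · tauto
  · linear_combination h0

theorem NZ.c5 (h : NZ f) {a b c d e : V} (hab : f a b ≠ 0) (hbc : f b c ≠ 0) (hcd : f c d ≠ 0)
    (hde : f d e ≠ 0) (hea : f e a ≠ 0) (hn : [a, b, c, d, e].Nodup) :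
    f a b + f b c + f c d + f d e + f e a ≠ 0 := by
  intro h0
  simp only [List.nodup_cons, List.mem_cons, List.not_mem_nil, or_false, not_or] at hn
  refine h a _ ⟨b, e, _, Pa.cons hbc ?_ (Pa.cons hcd ?_ (Pa.cons hde ?_ (Pa.one e))),
    ?_, ?_, hab, hea, ?_⟩
  · simp; tauto
  · simp; tauto
  · simp; tauto
  · simp; tauto
  · tauto
  · linear_combination h0

/-! ### The class of labelled graphs -/

/-- `v` is a (non-isolated) vertex. -/
def sup (f : V → V → ZMod 3) (v : V) : Prop := ∃ q, f v q ≠ 0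

/-- Neighbourhood. -/
def N (f : V → V → ZMod 3) (v : V) : Finset V := Finset.univ.filter (fun q => f v q ≠ 0)

/-- Set of non-isolated vertices. -/
noncomputable def supp (f : V → V → ZMod 3) : Finset V := Finset.univ.filter (fun q => sup f q)

theorem mem_N {v q : V} : q ∈ N f v ↔ f v q ≠ 0 := by simp [N]
theorem mem_supp {v : V} : v ∈ supp f ↔ sup f v := by simp [supp]

/-- Removing any vertex leaves a connected graph. -/
def Conn2 (f : V → V → ZMod 3) : Prop :=
  ∀ w, sup f w → ∀ S : V → Prop, (∀ p q, p ≠ w → q ≠ w → S p → f p q ≠ 0 → S q) →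
    ∀ a b, S a → a ≠ w → b ≠ w → sup f a → sup f b → S b

/-- The class of labelled graphs considered. -/
structure Cls (f : V → V → ZMod 3) : Prop where
  symm : ∀ u v, f u v = f v u
  diag : ∀ v, f v v = 0
  nz : NZ f
  conn : Conn2 f
  ne : ∃ v, sup f v
  deg : ∀ v, sup f v → 3 ≤ (N f v).card ∨ ∃ a b, a ≠ b ∧ N f v = {a, b} ∧ f v a = f v b ∧
    f a b = 0 ∧ 3 ≤ (N f a).card ∧ 3 ≤ (N f b).card
  twin : ∀ u v, (N f u).card = 2 → N f u = N f v → u = v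

/-- Suppressing the vertex `u` with neighbours `a`, `b`. -/
def sp (f : V → V → ZMod 3) (u a b : V) (e : ZMod 3) : V → V → ZMod 3 := fun p q =>
  if p = u ∨ q = u then 0 else if (p = a ∧ q = b) ∨ (p = b ∧ q = a) then e else f p q

theorem ne_zero_cases (t : ZMod 3) (h : t ≠ 0) : t + t ≠ 0 := by
  revert t; decide

theorem N_three {a b c v : V} (h : N f v = {a, b, c}) (q : V) :
    f v q ≠ 0 ↔ (q = a ∨ q = b ∨ q = c) := by
  rw [← mem_N, h]; simp

theorem N_two {a b v : V} (h : N f v = {a, b}) (q : V) :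
    f v q ≠ 0 ↔ (q = a ∨ q = b) := by
  rw [← mem_N, h]; simp

theorem sp_nz (hc : Cls f) {u a b : V} (hab : a ≠ b) (hN : N f u = {a, b})
    (ht : f u a = f u b) (hf : f a b = 0) :
    NZ (sp f u a b (f u a + f u a)) := by
  have hs := hc.symm
  have hua : f u a ≠ 0 := (N_two hN a).2 (by simp)
  have hub : f u b ≠ 0 := (N_two hN b).2 (by simp)
  have hau : u ≠ a := by rintro rfl; exact hua (hc.diag _)
  have hbu : u ≠ b := by rintro rfl; exact hub (hc.diag _)
  have hs' : ∀ p q, sp f u a b (f u a + f u a) p q = sp f u a b (f u a + f u a) q p := by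
    intro p q; simp only [sp]; rw [hs p q]; grind
  have hu0 : ∀ q, sp f u a b (f u a + f u a) u q = 0 := by intro q; simp [sp]
  have key : ∀ p q, p ≠ a → q ≠ a → sp f u a b (f u a + f u a) p q ≠ 0 →
      sp f u a b (f u a + f u a) p q = f p q := by
    intro p q hp hq h; simp only [sp] at h ⊢; grind
  refine NZ.of_vertex hs' a ?_ ?_
  · intro v W hv hW hz
    refine hc.nz v W (hz.congr hs' hs ?_)
    intro p hp q hq
    exact key p q (by rintro rfl; simp_all) (by rintro rfl; simp_all)
  · intro W hz
    have hsup := hz.sup hs'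
    have huW : u ∉ W := by
      intro h
      obtain ⟨q, hq⟩ := hsup u (by simp [h])
      exact hq (hu0 q)
    obtain ⟨n1, n2, s, hP, haW, hn, h1, h2, h0⟩ := hz
    have hP' : Pa f n1 n2 W s := by
      refine hP.congr ?_
      intro p hp q hq
      exact key p q (by rintro rfl; simp_all) (by rintro rfl; simp_all)
    have hn1 := hP.start_mem
    have hn2 := hP.end_mem
    have e1 : n1 = b ∨ (n1 ≠ b ∧ sp f u a b (f u a + f u a) a n1 = f a n1) := by
      simp only [sp]; grind
    have e2 : n2 = b ∨ (n2 ≠ b ∧ sp f u a b (f u a + f u a) n2 a = f n2 a) := by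
      simp only [sp]; grind
    have eb : sp f u a b (f u a + f u a) a b = f u a + f u a := by
      simp only [sp]; grind
    rcases e1 with rfl | ⟨e1, e1'⟩
    · rcases e2 with rfl | ⟨e2, e2'⟩
      · exact hn rfl
      · rw [eb, e2'] at h0
        rw [e2'] at h2
        refine hc.nz a _ ⟨u, n2, _, Pa.cons hub huW hP', ?_, ?_, hs u a ▸ hua, h2, ?_⟩
        · simp [haW, hau.symm]
        · rintro rfl; exact huW hn2
        · rw [hs a u, ← ht]; linear_combination h0
    · rcases e2 with rfl | ⟨e2, e2'⟩
      · rw [hs' n2 a, eb, e1'] at h0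
        rw [e1'] at h1
        refine hc.nz a _ ⟨n1, u, _, hP'.snoc (hs u n2 ▸ hub) huW, ?_, ?_, h1, hua, ?_⟩
        · simp [haW, hau.symm]
        · rintro rfl; exact huW hn1
        · rw [hs n2 u, ← ht]; linear_combination h0
      · rw [e1', e2'] at h0
        rw [e1'] at h1
        rw [e2'] at h2
        exact hc.nz a W ⟨n1, n2, s, hP', haW, hn, h1, h2, h0⟩

theorem suppress (hc : Cls f) {u a b : V} (hab : a ≠ b) (hN : N f u = {a, b})
    (ht : f u a = f u b) (hf : f a b = 0) (ha : 3 ≤ (N f a).card) (hb : 3 ≤ (N f b).card) :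
    ∃ f' : V → V → ZMod 3, Cls f' ∧ supp f' ⊂ supp f := by
  have hs := hc.symm
  have hua : f u a ≠ 0 := (N_two hN a).2 (by simp)
  have hub : f u b ≠ 0 := (N_two hN b).2 (by simp)
  have hau : u ≠ a := by rintro rfl; exact hua (hc.diag _)
  have hbu : u ≠ b := by rintro rfl; exact hub (hc.diag _)
  have hnz := sp_nz hc hab hN ht hf
  have hee := ne_zero_cases _ hua
  generalize f u a + f u a = e at hnz hee
  have hba : f b a = 0 := by rw [hs]; exact hf
  have hs' : ∀ p q, sp f u a b e p q = sp f u a b e q p := by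
    intro p q; simp only [sp]; rw [hs p q]; grind
  have hNu : ∀ q, f u q ≠ 0 ↔ (q = a ∨ q = b) := N_two hN
  have hNu' : ∀ q, f q u ≠ 0 ↔ (q = a ∨ q = b) := fun q => by rw [hs q u]; exact hNu q
  have Na : N (sp f u a b e) a = insert b ((N f a).erase u) := by
    ext q; simp only [mem_N, Finset.mem_insert, Finset.mem_erase, sp]; grind
  have Nb : N (sp f u a b e) b = insert a ((N f b).erase u) := by
    ext q; simp only [mem_N, Finset.mem_insert, Finset.mem_erase, sp]; grind
  have Nq : ∀ v, v ≠ u → v ≠ a → v ≠ b → N (sp f u a b e) v = N f v := by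
    intro v h1 h2 h3
    ext q; simp only [mem_N, sp]; grind
  have Nu : N (sp f u a b e) u = ∅ := by
    ext q; simp [mem_N, sp]
  have ca : 3 ≤ (N (sp f u a b e) a).card := by
    rw [Na, Finset.card_insert_of_notMem, Finset.card_erase_of_mem]
    · omega
    · rw [mem_N, hs]; exact hua
    · simp [mem_N, hf]
  have cb : 3 ≤ (N (sp f u a b e) b).card := by
    rw [Nb, Finset.card_insert_of_notMem, Finset.card_erase_of_mem]
    · omega
    · rw [mem_N, hs]; exact hub
    · simp [mem_N, hba]
  have cge : ∀ v, 3 ≤ (N f v).card → v ≠ u → 3 ≤ (N (sp f u a b e) v).card := by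
    intro v hv hvu
    by_cases h1 : v = a
    · rw [h1]; exact ca
    by_cases h2 : v = b
    · rw [h2]; exact cb
    rw [Nq v hvu h1 h2]; exact hv
  have hsup : ∀ v, sup (sp f u a b e) v → v ≠ u ∧ sup f v := by
    rintro v ⟨q, hq⟩
    constructor
    · rintro rfl; simp [sp] at hq
    · by_cases h1 : v = a
      · exact ⟨u, by rw [h1, hs]; exact hua⟩
      by_cases h2 : v = b
      · exact ⟨u, by rw [h2, hs]; exact hub⟩
      refine ⟨q, ?_⟩
      simp only [sp] at hq; grind
  refine ⟨sp f u a b e, ⟨hs', ?_, hnz, ?_, ?_, ?_, ?_⟩, ?_⟩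
  · intro v; simp only [sp]; have := hc.diag v; grind
  · intro w hw S hS p q hp hpw hqw hsp hsq
    have hw' := hsup w hw
    have hp' := hsup p hsp
    have hq' := hsup q hsq
    have := hc.conn w hw'.2
      (fun v => (v ≠ u ∧ S v) ∨ (v = u ∧ ((a ≠ w ∧ S a) ∨ (b ≠ w ∧ S b)))) ?_ p q
      (Or.inl ⟨hp'.1, hp⟩) hpw hqw hp'.2 hq'.2
    · rcases this with h | h
      · exact h.2
      · exact absurd h.1 hq'.1
    · intro x y hx hy hSx hxy
      have h1 := hS a b
      have h2 := hS b a
      have h3 := hS x y hx hy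
      have hab' : sp f u a b e a b ≠ 0 := by simp only [sp]; grind
      have hba' : sp f u a b e b a ≠ 0 := by simp only [sp]; grind
      have h4 := hNu y
      have h5 := hNu' x
      have h6 : x ≠ u → y ≠ u → sp f u a b e x y ≠ 0 := by
        intro h h'; simp only [sp]; grind
      grind
  · exact ⟨a, b, by simp only [sp]; grind⟩
  · intro v hv
    obtain ⟨hvu, hv⟩ := hsup v hv
    by_cases h1 : v = a
    · rw [h1]; exact Or.inl ca
    by_cases h2 : v = b
    · rw [h2]; exact Or.inl cb
    rw [Nq v hvu h1 h2]
    rcases hc.deg v hv with h | ⟨c, d, hcd, hNv, h3, h4, h5, h6⟩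
    · exact Or.inl h
    · right
      have hNv' := N_two hNv
      have hcu : c ≠ u := by
        rintro rfl
        have := (hNv' c).2 (by simp)
        have := (hNu' v).1 this
        grind
      have hdu : d ≠ u := by
        rintro rfl
        have := (hNv' d).2 (by simp)
        have := (hNu' v).1 this
        grind
      refine ⟨c, d, hcd, hNv, ?_, ?_, cge c h5 hcu, cge d h6 hdu⟩
      · simp only [sp]; grind
      · have htw := hc.twin u v (by rw [hN]; simp [hab])
        have : ¬ ((c = a ∧ d = b) ∨ (c = b ∧ d = a)) := by
          rintro (⟨rfl, rfl⟩ | ⟨rfl, rfl⟩)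
          · exact hvu (htw (by rw [hN, hNv])).symm
          · exact hvu (htw (by rw [hN, hNv, Finset.pair_comm])).symm
        simp only [sp]; grind
  · intro x y hx hxy
    have hxu : x ≠ u := by rintro rfl; rw [Nu] at hx; simp at hx
    have hyu : y ≠ u := by rintro rfl; rw [hxy, Nu] at hx; simp at hx
    have hxa : x ≠ a := by rintro rfl; omega
    have hxb : x ≠ b := by rintro rfl; omega
    have hya : y ≠ a := by rintro rfl; rw [hxy] at hx; omega
    have hyb : y ≠ b := by rintro rfl; rw [hxy] at hx; omega
    rw [Nq x hxu hxa hxb] at hx hxy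
    rw [Nq y hyu hya hyb] at hxy
    exact hc.twin x y hx hxy
  · rw [Finset.ssubset_iff_of_subset]
    · refine ⟨u, mem_supp.2 ⟨a, hua⟩, ?_⟩
      rw [mem_supp]; intro h; exact (hsup u h).1 rfl
    · intro v hv; rw [mem_supp] at *; exact (hsup v hv).2

/-! ### Sides of 2-cuts -/

/-- Adding the edge `x y` with label `e`. -/
def ad (g : V → V → ZMod 3) (x y : V) (e : ZMod 3) : V → V → ZMod 3 := fun p q =>
  if (p = x ∧ q = y) ∨ (p = y ∧ q = x) then e else g p q

theorem ad_nz (hs : ∀ u v, g u v = g v u) (hn : NZ g) {x y : V} (hxy : x ≠ y)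
    {e l : ZMod 3} (hl : ∀ U s, Pa g x y U s → s = l)
    (hel : e + l ≠ 0) : NZ (ad g x y e) := by
  have hs' : ∀ p q, ad g x y e p q = ad g x y e q p := by
    intro p q; simp only [ad]; rw [hs p q]; grind
  have key : ∀ p q, p ≠ x → q ≠ x → ad g x y e p q = g p q := by
    intro p q hp hq; simp only [ad]; grind
  refine NZ.of_vertex hs' x ?_ ?_
  · intro v W hv hW hz
    refine hn v W (hz.congr hs' hs ?_)
    intro p hp q hq _
    exact key p q (by rintro rfl; simp_all) (by rintro rfl; simp_all)
  · intro W hz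
    obtain ⟨n1, n2, s, hP, haW, hn12, h1, h2, h0⟩ := hz
    have hP' : Pa g n1 n2 W s := by
      refine hP.congr ?_
      intro p hp q hq _
      exact key p q (by rintro rfl; simp_all) (by rintro rfl; simp_all)
    have e1 : n1 = y ∨ (n1 ≠ y ∧ ad g x y e x n1 = g x n1) := by
      simp only [ad]; grind
    have e2 : n2 = y ∨ (n2 ≠ y ∧ ad g x y e n2 x = g n2 x) := by
      simp only [ad]; grind
    have eb : ad g x y e x y = e := by simp [ad]
    rcases e1 with rfl | ⟨e1, e1'⟩
    · rcases e2 with rfl | ⟨e2, e2'⟩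
      · exact hn12 rfl
      · rw [eb, e2'] at h0
        rw [e2'] at h2
        have := hl _ _ (Pa.cons (by rwa [hs]) haW (hP'.rev hs))
        apply hel
        rw [← this, hs x n2]; linear_combination h0
    · rcases e2 with rfl | ⟨e2, e2'⟩
      · rw [hs' n2 x, eb, e1'] at h0
        rw [e1'] at h1
        have := hl _ _ (Pa.cons h1 haW hP')
        apply hel
        rw [← this]; linear_combination h0
      · rw [e1', e2'] at h0
        rw [e1'] at h1
        rw [e2'] at h2
        exact hn x W ⟨n1, n2, s, hP', haW, hn12, h1, h2, h0⟩

/-- Vertices of a rooted graph. -/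
def vs (g : V → V → ZMod 3) (x y : V) (v : V) : Prop := sup g v ∨ v = x ∨ v = y

/-- `g` together with an edge `x y` is 2-connected. -/
def RC (g : V → V → ZMod 3) (x y : V) : Prop :=
  ∀ w, vs g x y w → ∀ S : V → Prop, (∀ p q, p ≠ w → q ≠ w → S p → g p q ≠ 0 → S q) →
    (x ≠ w → y ≠ w → (S x ↔ S y)) →
    ∀ a b, S a → a ≠ w → b ≠ w → vs g x y a → vs g x y b → S b

/-- Rooted graphs. -/
structure RG (g : V → V → ZMod 3) (x y : V) : Prop where
  symm : ∀ u v, g u v = g v u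
  diag : ∀ v, g v v = 0
  nz : NZ g
  ne : x ≠ y
  nadj : g x y = 0
  int : ∃ v, sup g v ∧ v ≠ x ∧ v ≠ y
  deg : ∀ v, sup g v → v ≠ x → v ≠ y → 3 ≤ (N g v).card
  conn : RC g x y

theorem RG.swap {x y : V} (h : RG g x y) : RG g y x := by
  refine ⟨h.symm, h.diag, h.nz, h.ne.symm, by rw [h.symm]; exact h.nadj, ?_, ?_, ?_⟩
  · obtain ⟨v, h1, h2, h3⟩ := h.int; exact ⟨v, h1, h3, h2⟩
  · intro v h1 h2 h3; exact h.deg v h1 h3 h2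
  · intro w hw S hS hl a b h1 h2 h3 h4 h5
    refine h.conn w ?_ S hS ?_ a b h1 h2 h3 ?_ ?_ <;> simp only [vs] at * <;> tauto

/-- Two different path labels. -/
def TwoL (g : V → V → ZMod 3) (x y : V) : Prop :=
  ∃ U1 U2 s1 s2, Pa g x y U1 s1 ∧ Pa g x y U2 s2 ∧ s1 ≠ s2

/-- vertex set of a rooted graph -/
noncomputable def vset (g : V → V → ZMod 3) (x y : V) : Finset V :=
  Finset.univ.filter (fun q => vs g x y q)

theorem mem_vset {x y v : V} : v ∈ vset g x y ↔ vs g x y v := by simp [vset]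

theorem RG.nbr {x y : V} (h : RG g x y) : ∃ q, g x q ≠ 0 := by
  by_contra hc
  push Not at hc
  obtain ⟨v, h1, h2, h3⟩ := h.int
  have := h.conn y (by simp [vs]) (fun p => p = x) (by grind) (by grind) x v rfl h.ne h3
    (by simp [vs]) (by simp [vs, h1])
  exact h2 this

/-- Shifting a root of degree one. -/
theorem RG.shift {x y z : V} (h : RG g x y) (hz : ∀ q, g x q ≠ 0 ↔ q = z) :
    ∃ g', RG g' z y ∧ vset g' z y ⊂ vset g x y ∧ (TwoL g' z y → TwoL g x y) := by
  have hs := h.symm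
  have hxz : g x z ≠ 0 := (hz z).2 rfl
  have hzx : z ≠ x := by rintro rfl; exact hxz (h.diag _)
  have hzy : z ≠ y := by rintro rfl; exact hxz h.nadj
  have hz3 := h.deg z ⟨x, by rwa [hs]⟩ hzx hzy
  have hxy := h.ne
  let g' : V → V → ZMod 3 := fun p q =>
    if p = x ∨ q = x then 0 else if (p = z ∧ q = y) ∨ (p = y ∧ q = z) then 0 else g p q
  have g'd : ∀ p q, g' p q =
    if p = x ∨ q = x then 0 else if (p = z ∧ q = y) ∨ (p = y ∧ q = z) then 0 else g p q :=
    fun p q => rfl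
  clear_value g'
  have hs' : ∀ p q, g' p q = g' q p := by
    intro p q; simp only [g'd]; rw [hs p q]; grind
  have hle : ∀ p q, g' p q ≠ 0 → g' p q = g p q := by
    intro p q; rw [g'd]; grind
  have hsup : ∀ v, sup g' v → v ≠ x ∧ sup g v := by
    rintro v ⟨q, hq⟩
    refine ⟨?_, q, by rw [← hle _ _ hq]; exact hq⟩
    rintro rfl; simp [g'd] at hq
  have hzx' : ∀ q, g q x ≠ 0 ↔ q = z := fun q => by rw [hs]; exact hz q
  have hN : ∀ v, v ≠ x → v ≠ z → v ≠ y → N g' v = N g v := by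
    intro v h1 h2 h3
    ext q; simp only [mem_N, g'd]; have := hzx' v; grind
  have hvs : ∀ v, vs g' z y v → v ≠ x ∧ vs g x y v := by
    intro v hv
    rcases hv with hv | rfl | rfl
    · have := hsup v hv; exact ⟨this.1, Or.inl this.2⟩
    · exact ⟨hzx, Or.inl ⟨x, by rwa [hs]⟩⟩
    · exact ⟨hxy.symm, by simp [vs]⟩
  refine ⟨g', ⟨hs', ?_, ?_, hzy, ?_, ?_, ?_, ?_⟩, ?_, ?_⟩
  · intro v; have := h.diag v; rw [g'd]; grind
  · exact h.nz.mono hs hs' hle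
  · simp [g'd]
  · have : ∃ q ∈ N g z, q ≠ x ∧ q ≠ y := by
      have h1 : ¬ (N g z ⊆ {x, y}) := by
        intro h'
        have := Finset.card_le_card h'
        have h2 := Finset.card_le_two (a := x) (b := y)
        omega
      rw [Finset.subset_iff] at h1
      push Not at h1
      obtain ⟨q, hq, h2⟩ := h1
      exact ⟨q, hq, by simpa using h2⟩
    obtain ⟨q, hq, h1, h2⟩ := this
    rw [mem_N] at hq
    have hqz : q ≠ z := by rintro rfl; exact hq (h.diag _)
    exact ⟨q, ⟨z, by rw [g'd]; rw [hs] at hq; grind⟩, hqz, h2⟩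
  · intro v hv h1 h2
    have := hsup v hv
    rw [hN v this.1 h1 h2]
    exact h.deg v this.2 this.1 h2
  · intro w hw S hS hl a b ha haw hbw hva hvb
    have hw' := hvs w hw
    have ha' := hvs a hva
    have hb' := hvs b hvb
    have := h.conn w hw'.2
      (fun v => (v ≠ x ∧ S v) ∨ (v = x ∧ ((z ≠ w ∧ S z) ∨ (z = w ∧ S y)))) ?_ ?_ a b
      (Or.inl ⟨ha'.1, ha⟩) haw hbw ha'.2 hb'.2
    · rcases this with h | h
      · exact h.2
      · exact absurd h.1 hb'.1
    · intro p q hp hq hSp hpq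
      have h1 := hz q
      have h2 := hzx' p
      have h3 := hS p q hp hq
      have h4 := g'd p q
      grind
    · intro h1 h2
      grind
  · rw [Finset.ssubset_iff_of_subset]
    · refine ⟨x, mem_vset.2 (by simp [vs]), ?_⟩
      rw [mem_vset]
      intro h; exact (hvs x h).1 rfl
    · intro v hv
      rw [mem_vset] at *
      exact (hvs v hv).2
  · rintro ⟨U1, U2, s1, s2, p1, p2, hne⟩
    have hx : ∀ U s, Pa g' z y U s → x ∉ U := by
      intro U s p hx
      rcases p.sup hs' with h' | h'
      · exact hzy h'
      · obtain ⟨q, hq⟩ := h' x hx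
        simp [g'd] at hq
    exact ⟨_, _, _, _, Pa.cons hxz (hx _ _ p1) (p1.congr fun p _ q _ => hle p q),
      Pa.cons hxz (hx _ _ p2) (p2.congr fun p _ q _ => hle p q), by simpa using hne⟩

theorem exists_eps (l : ZMod 3) : ∃ e : ZMod 3, e ≠ 0 ∧ e + l ≠ 0 := by
  revert l; decide

theorem RG.big {x y : V} (h : RG g x y) (hx : 2 ≤ (N g x).card) (hy : 2 ≤ (N g y).card)
    {n : ℕ} (hn : (vset g x y).card < n)
    (hmin : ∀ f' : V → V → ZMod 3, Cls f' → (supp f').card < n → False) : TwoL g x y := by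
  by_contra hT
  have : ∃ l, ∀ U s, Pa g x y U s → s = l := by
    by_cases hp : ∃ U s, Pa g x y U s
    · obtain ⟨U, s, hp⟩ := hp
      refine ⟨s, fun W r hr => ?_⟩
      by_contra hne
      exact hT ⟨_, _, _, _, hr, hp, hne⟩
    · push Not at hp
      exact ⟨0, fun U s h => absurd h (hp U s)⟩
  obtain ⟨l, hl⟩ := this
  obtain ⟨e, he, hel⟩ := exists_eps l
  have hs := h.symm
  have hxy := h.ne
  have hnadj := h.nadj
  have hnz := ad_nz hs h.nz hxy hl hel
  have hd : ∀ p q, ad g x y e p q =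
    if (p = x ∧ q = y) ∨ (p = y ∧ q = x) then e else g p q := fun p q => rfl
  generalize ad g x y e = f' at *
  have hs' : ∀ p q, f' p q = f' q p := by
    intro p q; simp only [hd]; rw [hs p q]; grind
  have hsup : ∀ v, sup f' v → vs g x y v := by
    rintro v ⟨q, hq⟩
    by_cases h1 : v = x
    · simp [vs, h1]
    by_cases h2 : v = y
    · simp [vs, h2]
    left; refine ⟨q, ?_⟩
    rw [hd] at hq; grind
  have hNx : N f' x = insert y (N g x) := by
    ext q; simp only [mem_N, Finset.mem_insert, hd]; grind
  have hNy : N f' y = insert x (N g y) := by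
    ext q; simp only [mem_N, Finset.mem_insert, hd]; grind
  have hNv : ∀ v, v ≠ x → v ≠ y → N f' v = N g v := by
    intro v h1 h2
    ext q; simp only [mem_N, hd]; grind
  have hdeg : ∀ v, sup f' v → 3 ≤ (N f' v).card := by
    intro v hv
    by_cases h1 : v = x
    · rw [h1, hNx, Finset.card_insert_of_notMem (by simp [mem_N, hnadj])]; omega
    by_cases h2 : v = y
    · rw [h2, hNy, Finset.card_insert_of_notMem (by simp [mem_N, hs y x, hnadj])]; omega
    rw [hNv v h1 h2]
    rcases hsup v hv with h | h | h
    · exact RG.deg ‹_› v h h1 h2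
    · exact absurd h h1
    · exact absurd h h2
  refine hmin f' ⟨hs', ?_, hnz, ?_, ⟨x, y, by rw [hd]; grind⟩, fun v hv => Or.inl (hdeg v hv), ?_⟩ ?_
  · intro v; rw [hd]; have := h.diag v; grind
  · intro w hw S hS a b ha haw hbw hva hvb
    refine h.conn w (hsup w hw) S ?_ ?_ a b ha haw hbw (hsup a hva) (hsup b hvb)
    · intro p q hp hq hSp hpq
      refine hS p q hp hq hSp ?_
      rw [hd]; grind
    · intro h1 h2
      have h3 := hS x y h1 h2
      have h4 := hS y x h2 h1
      have : f' x y ≠ 0 := by rw [hd]; grind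
      have : f' y x ≠ 0 := by rw [hd]; grind
      grind
  · intro u v hu huv
    exfalso
    have : (N f' u).Nonempty := by rw [← Finset.card_pos]; omega
    obtain ⟨q, hq⟩ := this
    have := hdeg u ⟨q, mem_N.1 hq⟩
    omega
  · refine lt_of_le_of_lt (Finset.card_le_card ?_) hn
    intro v hv
    simp only [vset, Finset.mem_filter, Finset.mem_univ, true_and]
    exact hsup v (mem_supp.1 hv)

theorem N_one {x : V} (hx : ∃ q, g x q ≠ 0) (h : ¬ 2 ≤ (N g x).card) :
    ∃ z, ∀ q, g x q ≠ 0 ↔ q = z := by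
  have h1 : (N g x).card = 1 := by
    have : 0 < (N g x).card := by
      rw [Finset.card_pos]; obtain ⟨q, hq⟩ := hx; exact ⟨q, mem_N.2 hq⟩
    omega
  obtain ⟨z, hz⟩ := Finset.card_eq_one.1 h1
  refine ⟨z, fun q => ?_⟩
  rw [← mem_N, hz]; simp

theorem TwoL.swap (hs : ∀ u v, g u v = g v u) {x y : V} (h : TwoL g x y) : TwoL g y x := by
  obtain ⟨U1, U2, s1, s2, p1, p2, hne⟩ := h
  exact ⟨U1, U2, s1, s2, p1.rev hs, p2.rev hs, hne⟩

theorem RG.two {n : ℕ}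
    (hmin : ∀ f' : V → V → ZMod 3, Cls f' → (supp f').card < n → False) :
    ∀ (m : ℕ) (g : V → V → ZMod 3) (x y : V), RG g x y → (vset g x y).card = m → m < n →
      TwoL g x y := by
  intro m
  induction m using Nat.strong_induction_on with
  | _ m ih =>
    intro g x y h hm hmn
    by_cases hx : 2 ≤ (N g x).card
    · by_cases hy : 2 ≤ (N g y).card
      · exact h.big hx hy (hm ▸ hmn) hmin
      · obtain ⟨z, hz⟩ := N_one h.swap.nbr hy
        obtain ⟨g', h1, h2, h3⟩ := h.swap.shift hz
        have h4 := Finset.card_lt_card h2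
        have h5 : vset g y x = vset g x y := by
          ext v; rw [mem_vset, mem_vset]; simp only [vs]; tauto
        rw [h5, hm] at h4
        exact (h3 (ih _ h4 g' z x h1 rfl (by omega))).swap h.symm
    · obtain ⟨z, hz⟩ := N_one h.nbr hx
      obtain ⟨g', h1, h2, h3⟩ := h.shift hz
      have h4 := Finset.card_lt_card h2
      rw [hm] at h4
      exact h3 (ih _ h4 g' z y h1 rfl (by omega))

/-- One side of a 2-cut. -/
noncomputable def side (f : V → V → ZMod 3) (a b : V) (S : V → Prop) : V → V → ZMod 3 := fun p q =>
  if (S p ∨ p = a ∨ p = b) ∧ (S q ∨ q = a ∨ q = b) ∧ ¬ (p = a ∧ q = b) ∧ ¬ (p = b ∧ q = a)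
  then f p q else 0

theorem side_RG (hc : Cls f) (h3 : ∀ v, sup f v → 3 ≤ (N f v).card) {a b : V} (hab : a ≠ b)
    (ha : sup f a) (hb : sup f b) {S : V → Prop} (hSa : ¬ S a) (hSb : ¬ S b)
    (hS : ∀ p q, q ≠ a → q ≠ b → S p → f p q ≠ 0 → S q) {c : V} (hSc : S c) (hcs : sup f c) :
    RG (side f a b S) a b := by
  have hs := hc.symm
  have hd : ∀ p q, side f a b S p q =
    if (S p ∨ p = a ∨ p = b) ∧ (S q ∨ q = a ∨ q = b) ∧ ¬ (p = a ∧ q = b) ∧ ¬ (p = b ∧ q = a)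
    then f p q else 0 := fun p q => rfl
  generalize side f a b S = g at *
  have hs' : ∀ p q, g p q = g q p := by
    intro p q; simp only [hd]; rw [hs p q]; grind
  have hle : ∀ p q, g p q ≠ 0 → g p q = f p q := by
    intro p q; rw [hd]; grind
  have hN : ∀ v, S v → N g v = N f v := by
    intro v hv
    ext q; simp only [mem_N, hd]; have := hS v q; grind
  have hsup : ∀ v, sup g v → sup f v ∧ (S v ∨ v = a ∨ v = b) := by
    rintro v ⟨q, hq⟩
    refine ⟨⟨q, by rw [← hle _ _ hq]; exact hq⟩, ?_⟩
    rw [hd] at hq; grind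
  have hvs : ∀ v, vs g a b v → sup f v ∧ (S v ∨ v = a ∨ v = b) := by
    rintro v (hv | rfl | rfl)
    · exact hsup v hv
    · exact ⟨ha, by simp⟩
    · exact ⟨hb, by simp⟩
  have hcs' : sup g c := by
    obtain ⟨q, hq⟩ := hcs
    rw [← mem_N, ← hN c hSc] at hq
    exact ⟨q, mem_N.1 hq⟩
  refine ⟨hs', ?_, hc.nz.mono hs hs' hle, hab, by simp [hd], ⟨c, hcs', ?_, ?_⟩, ?_, ?_⟩
  · intro v; rw [hd]; have := hc.diag v; grind
  · rintro rfl; exact hSa hSc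
  · rintro rfl; exact hSb hSc
  · intro v hv h1 h2
    have := hsup v hv
    have hSv : S v := by tauto
    rw [hN v hSv]; exact h3 v this.1
  · intro w hw T hT hl p q hp hpw hqw hvp hvq
    have hw' := hvs w hw
    have hp' := hvs p hvp
    have hq' := hvs q hvq
    have := hc.conn w hw'.1
      (fun v => ((S v ∨ v = a ∨ v = b) ∧ T v) ∨ (¬ (S v ∨ v = a ∨ v = b) ∧
        ((a ≠ w ∧ T a) ∨ (b ≠ w ∧ T b)))) ?_ p q
      (Or.inl ⟨hp'.2, hp⟩) hpw hqw hp'.1 hq'.1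
    · rcases this with h | h
      · exact h.2
      · exact absurd hq'.2 h.1
    · intro x y hx hy hTx hxy
      have h1 := hT x y hx hy
      have h2 := hd x y
      have h4 := hS x y
      have h5 := hS y x
      have h6 := hs x y
      clear hN hsup hvs h3 hd hs' hle hT hS
      by_cases e1 : x = a <;> by_cases e2 : x = b <;> by_cases e3 : y = a <;>
        by_cases e4 : y = b <;> grind

theorem side_card {a b : V} (ha : sup f a) (hb : sup f b) {S : V → Prop} {d : V} (hd : sup f d)
    (hda : d ≠ a) (hdb : d ≠ b) (hSd : ¬ S d) :
    (vset (side f a b S) a b).card < (supp f).card := by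
  apply Finset.card_lt_card
  rw [Finset.ssubset_iff_of_subset]
  · refine ⟨d, mem_supp.2 hd, ?_⟩
    rw [mem_vset]
    rintro (⟨q, hq⟩ | h | h)
    · simp only [side] at hq; grind
    · exact hda h
    · exact hdb h
  · intro v hv
    rw [mem_vset] at hv
    rw [mem_supp]
    rcases hv with ⟨q, hq⟩ | rfl | rfl
    · refine ⟨q, ?_⟩
      simp only [side] at hq; grind
    · exact ha
    · exact hb

theorem two_two (s1 s2 r1 r2 : ZMod 3) (h : s1 ≠ s2) (h' : r1 ≠ r2) :
    s1 + r1 = 0 ∨ s1 + r2 = 0 ∨ s2 + r1 = 0 ∨ s2 + r2 = 0 := by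
  revert s1 s2 r1 r2; decide

theorem glue (hs : ∀ u v, f u v = f v u) (hn : NZ f) {a b : V} (hab : a ≠ b) {S T : V → Prop}
    (hST : ∀ v, S v → ¬ T v) {U W : Finset V} {s r : ZMod 3}
    (p : Pa (side f a b S) a b U s) (q : Pa (side f a b T) a b W r) (h0 : s + r = 0) : False := by
  have gen : ∀ R : V → Prop, (∀ x y, side f a b R x y = side f a b R y x) ∧
      (∀ x y, side f a b R x y ≠ 0 → side f a b R x y = f x y) ∧
      (∀ x y, side f a b R x y ≠ 0 → R x ∨ x = a ∨ x = b) ∧ side f a b R a b = 0 := by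
    intro R
    refine ⟨?_, ?_, ?_, ?_⟩
    · intro x y; simp only [side]; rw [hs x y]; grind
    · intro x y; simp only [side]; grind
    · intro x y; simp only [side]; grind
    · simp [side]
  obtain ⟨a1, a2, a3, a4⟩ := gen S
  obtain ⟨b1, b2, b3, b4⟩ := gen T
  have hU : ∀ v ∈ U, S v ∨ v = a ∨ v = b := by
    intro v hv
    rcases p.sup a1 with h | h
    · exact absurd h hab
    · obtain ⟨x, hx⟩ := h v hv; exact a3 v x hx
  have hW : ∀ v ∈ W, T v ∨ v = a ∨ v = b := by
    intro v hv
    rcases q.sup b1 with h | h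
    · exact absurd h hab
    · obtain ⟨x, hx⟩ := h v hv; exact b3 v x hx
  rcases p.uncons with ⟨h, _⟩ | ⟨c, W1, r1, e1, n1, p1, rfl, rfl⟩
  · exact hab h
  rcases q.uncons with ⟨h, _⟩ | ⟨d, W2, r2, e2, n2, q2, rfl, rfl⟩
  · exact hab h
  rcases (q2.rev b1).uncons with ⟨h, _⟩ | ⟨e, W3, r3, e3, n3, q3, rfl, rfl⟩
  · exact e2 (h ▸ b4)
  have p1' := p1.congr (g := f) (fun x _ y _ => a2 x y)
  have q3' := q3.congr (g := f) (fun x _ y _ => b2 x y)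
  have E1 := a2 _ _ e1
  have E2 := b2 _ _ e2
  have E3 := b2 _ _ e3
  have hdis : Disjoint W1 W3 := by
    rw [Finset.disjoint_left]
    intro v hv1 hv3
    have h1 := hU v (by simp [hv1])
    have h2 := hW v (by simp [hv3])
    have h3 : v ≠ a := by rintro rfl; exact n1 hv1
    have h4 : v ≠ b := by rintro rfl; exact n3 hv3
    have := hST v
    tauto
  rw [E1] at e1 h0
  rw [E2] at e2 h0
  rw [E3] at e3 h0
  refine hn a _ ⟨c, d, _, p1'.append e3 q3' hdis, ?_, ?_, e1, by rwa [hs], ?_⟩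
  · simp only [Finset.mem_insert, not_or] at n2
    simp [n1, n2]
  · rintro rfl
    exact Finset.disjoint_left.1 hdis p1'.start_mem q3'.end_mem
  · rw [hs d a]; linear_combination h0

/-- A minimal member is 3-connected. -/
theorem conn3 (hc : Cls f) (h3 : ∀ v, sup f v → 3 ≤ (N f v).card)
    (hmin : ∀ f' : V → V → ZMod 3, Cls f' → (supp f').card < (supp f).card → False)
    {v w : V} (hvw : v ≠ w) (hv : sup f v) (hw : sup f w) (S : V → Prop)
    (hS : ∀ p q, p ≠ v → p ≠ w → q ≠ v → q ≠ w → S p → f p q ≠ 0 → S q) {a b : V}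
    (ha : S a) (hav : a ≠ v) (haw : a ≠ w) (hbv : b ≠ v) (hbw : b ≠ w)
    (has : sup f a) (hbs : sup f b) : S b := by
  by_contra hb
  have hs := hc.symm
  have A := RG.two hmin _ _ _ _ (side_RG hc h3 hvw hv hw (S := fun x => S x ∧ x ≠ v ∧ x ≠ w)
    (by simp) (by simp) (by
      intro p q h1 h2 h3 h4
      exact ⟨hS p q h3.2.1 h3.2.2 h1 h2 h3.1 h4, h1, h2⟩) ⟨ha, hav, haw⟩ has) rfl
    (side_card hv hw hbs hbv hbw (by simp [hb]))
  have B := RG.two hmin _ _ _ _ (side_RG hc h3 hvw hv hw (S := fun x => ¬ S x ∧ x ≠ v ∧ x ≠ w)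
    (by simp) (by simp) (by
      intro p q h1 h2 h3 h4
      refine ⟨fun h => h3.1 (hS q p h1 h2 h3.2.1 h3.2.2 h (by rwa [hs])), h1, h2⟩)
      ⟨hb, hbv, hbw⟩ hbs) rfl
    (side_card hv hw has hav haw (by simp [ha]))
  obtain ⟨U1, U2, s1, s2, p1, p2, hp⟩ := A
  obtain ⟨W1, W2, r1, r2, q1, q2, hq⟩ := B
  have hST : ∀ x, (S x ∧ x ≠ v ∧ x ≠ w) → ¬ (¬ S x ∧ x ≠ v ∧ x ≠ w) := by tauto
  rcases two_two s1 s2 r1 r2 hp hq with h | h | h | h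
  · exact glue hs hc.nz hvw hST p1 q1 h
  · exact glue hs hc.nz hvw hST p1 q2 h
  · exact glue hs hc.nz hvw hST p2 q1 h
  · exact glue hs hc.nz hvw hST p2 q2 h

/-! ### Minimal members and edge deletion -/

/-- A member of the class that is minimal. -/
structure Mn (f : V → V → ZMod 3) : Prop where
  cls : Cls f
  d3 : ∀ v, sup f v → 3 ≤ (N f v).card
  c3 : ∀ v w, v ≠ w → sup f v → sup f w → ∀ S : V → Prop,
    (∀ p q, p ≠ v → p ≠ w → q ≠ v → q ≠ w → S p → f p q ≠ 0 → S q) → ∀ a b,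
    S a → a ≠ v → a ≠ w → b ≠ v → b ≠ w → sup f a → sup f b → S b
  minS : ∀ f' : V → V → ZMod 3, Cls f' → supp f' ⊂ supp f → False
  minE : ∀ f' : V → V → ZMod 3, Cls f' → (∀ p q, f' p q ≠ 0 → f p q ≠ 0) →
    (∃ p q, f p q ≠ 0 ∧ f' p q = 0) → False

theorem nbr_avoid {x : V} (h : 3 ≤ (N f x).card) (a b : V) : ∃ q, f x q ≠ 0 ∧ q ≠ a ∧ q ≠ b := by
  have h1 : ¬ (N f x ⊆ {a, b}) := by
    intro h'
    have := Finset.card_le_card h'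
    have h2 := Finset.card_le_two (a := a) (b := b)
    omega
  rw [Finset.subset_iff] at h1
  push Not at h1
  obtain ⟨q, hq, h2⟩ := h1
  exact ⟨q, mem_N.1 hq, by simpa using h2⟩

theorem nbr_avoid3 {x : V} (h : 4 ≤ (N f x).card) (a b c : V) :
    ∃ q, f x q ≠ 0 ∧ q ≠ a ∧ q ≠ b ∧ q ≠ c := by
  have h1 : ¬ (N f x ⊆ {a, b, c}) := by
    intro h'
    have := Finset.card_le_card h'
    have h2 := Finset.card_le_three (a := a) (b := b) (c := c)
    omega
  rw [Finset.subset_iff] at h1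
  push Not at h1
  obtain ⟨q, hq, h2⟩ := h1
  exact ⟨q, mem_N.1 hq, by simpa using h2⟩

/-- Deleting an edge. -/
def dl (f : V → V → ZMod 3) (u v : V) : V → V → ZMod 3 := fun p q =>
  if (p = u ∧ q = v) ∨ (p = v ∧ q = u) then 0 else f p q

/-- The condition at the end `u` for deleting the edge `u v`. -/
def okE (f : V → V → ZMod 3) (u v : V) : Prop :=
  4 ≤ (N f u).card ∨ ∃ a b, a ≠ b ∧ a ≠ v ∧ b ≠ v ∧ N f u = {v, a, b} ∧ f u a = f u b ∧ f a b = 0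

theorem dl_conn (hM : Mn f) {u v : V} (huv : f u v ≠ 0) : Conn2 (dl f u v) := by
  have hs := hM.cls.symm
  have hne : u ≠ v := by rintro rfl; exact huv (hM.cls.diag _)
  have hd : ∀ p q, dl f u v p q = if (p = u ∧ q = v) ∨ (p = v ∧ q = u) then 0 else f p q :=
    fun p q => rfl
  generalize dl f u v = f' at *
  have hsup : ∀ x, sup f' x → sup f x := by
    rintro x ⟨q, hq⟩; exact ⟨q, by rw [hd] at hq; grind⟩
  intro w hw S hS a b ha haw hbw has hbs
  by_cases hwu : w = u
  · refine hM.cls.conn w (hsup w hw) S ?_ a b ha haw hbw (hsup _ has) (hsup _ hbs)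
    intro p q hp hq hSp hpq
    exact hS p q hp hq hSp (by rw [hd]; grind)
  by_cases hwv : w = v
  · refine hM.cls.conn w (hsup w hw) S ?_ a b ha haw hbw (hsup _ has) (hsup _ hbs)
    intro p q hp hq hSp hpq
    exact hS p q hp hq hSp (by rw [hd]; grind)
  have key : ∀ x y, (x = u ∧ y = v) ∨ (x = v ∧ y = u) → S x → S y := by
    intro x y hxy hx
    have hxs : sup f x := by
      rcases hxy with ⟨rfl, rfl⟩ | ⟨rfl, rfl⟩
      · exact ⟨_, huv⟩
      · exact ⟨_, by rw [hs]; exact huv⟩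
    have hys : sup f y := by
      rcases hxy with ⟨rfl, rfl⟩ | ⟨rfl, rfl⟩
      · exact ⟨_, by rw [hs]; exact huv⟩
      · exact ⟨_, huv⟩
    have hxw : x ≠ w := by grind
    obtain ⟨q, hq, hqy, hqw⟩ := nbr_avoid (hM.d3 x hxs) y w
    have hqx : q ≠ x := by rintro rfl; exact hq (hM.cls.diag _)
    have hSq : S q := hS x q hxw hqw hx (by rw [hd]; grind)
    refine hM.c3 x w hxw hxs (hsup w hw) S ?_ q y hSq hqx hqw (by grind) (by grind)
      ⟨x, by rwa [hs]⟩ hys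
    intro p r hp hpw hr hrw hSp hpr
    exact hS p r hpw hrw hSp (by rw [hd]; grind)
  refine hM.cls.conn w (hsup w hw) S ?_ a b ha haw hbw (hsup _ has) (hsup _ hbs)
  intro p q hp hq hSp hpq
  by_cases h : (p = u ∧ q = v) ∨ (p = v ∧ q = u)
  · exact key p q h hSp
  · exact hS p q hp hq hSp (by rw [hd]; grind)

/-- Lemma E. -/
theorem Mn.E (hM : Mn f) {u v : V} (huv : f u v ≠ 0) (hu : okE f u v) (hv : okE f v u) :
    False := by
  have hs := hM.cls.symm
  have hne : u ≠ v := by rintro rfl; exact huv (hM.cls.diag _)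
  have hconn := dl_conn hM huv
  have hd : ∀ p q, dl f u v p q = if (p = u ∧ q = v) ∨ (p = v ∧ q = u) then 0 else f p q :=
    fun p q => rfl
  generalize dl f u v = f' at *
  have hs' : ∀ p q, f' p q = f' q p := by
    intro p q; simp only [hd]; rw [hs p q]; grind
  have hle : ∀ p q, f' p q ≠ 0 → f' p q = f p q := by
    intro p q; rw [hd]; grind
  have hsup : ∀ x, sup f' x → sup f x := by
    rintro x ⟨q, hq⟩; exact ⟨q, by rw [hd] at hq; grind⟩
  have hNu : N f' u = (N f u).erase v := by
    ext q; simp only [mem_N, Finset.mem_erase, hd]; grind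
  have hNv : N f' v = (N f v).erase u := by
    ext q; simp only [mem_N, Finset.mem_erase, hd]; grind
  have hNx : ∀ x, x ≠ u → x ≠ v → N f' x = N f x := by
    intro x h1 h2
    ext q; simp only [mem_N, hd]; grind
  have hus : sup f u := ⟨v, huv⟩
  have hvs : sup f v := ⟨u, by rwa [hs]⟩
  have hdeg : ∀ x y, (x = u ∧ y = v) ∨ (x = v ∧ y = u) → okE f x y →
      3 ≤ (N f' x).card ∨ ∃ a b, a ≠ b ∧ a ≠ y ∧ b ≠ y ∧ N f' x = {a, b} ∧ f' x a = f' x b ∧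
        f' a b = 0 ∧ 3 ≤ (N f' a).card ∧ 3 ≤ (N f' b).card ∧ f a b = 0 ∧ N f x = {y, a, b} := by
    intro x y hxy hok
    have hNxy : N f' x = (N f x).erase y := by
      rcases hxy with ⟨rfl, rfl⟩ | ⟨rfl, rfl⟩
      · exact hNu
      · exact hNv
    have hmem : y ∈ N f x := by
      rw [mem_N]
      rcases hxy with ⟨rfl, rfl⟩ | ⟨rfl, rfl⟩
      · exact huv
      · rwa [hs]
    rcases hok with h | ⟨a, b, h1, h2, h3, h4, h5, h6⟩
    · left; rw [hNxy, Finset.card_erase_of_mem hmem]; omega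
    · right
      have hxa : f x a ≠ 0 := (N_three h4 a).2 (by simp)
      have hxb : f x b ≠ 0 := (N_three h4 b).2 (by simp)
      have hax : a ≠ x := by rintro rfl; exact hxa (hM.cls.diag _)
      have hbx : b ≠ x := by rintro rfl; exact hxb (hM.cls.diag _)
      refine ⟨a, b, h1, h2, h3, ?_, ?_, ?_, ?_, ?_, h6, h4⟩
      · rw [hNxy, h4]; ext q; simp only [Finset.mem_erase, Finset.mem_insert, Finset.mem_singleton]
        grind
      · rw [hd, hd]; grind
      · rw [hd]; grind
      · rw [hNx a (by grind) (by grind)]; exact hM.d3 a ⟨x, by rwa [hs]⟩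
      · rw [hNx b (by grind) (by grind)]; exact hM.d3 b ⟨x, by rwa [hs]⟩
  have hdu := hdeg u v (by simp) hu
  have hdv := hdeg v u (by simp) hv
  refine hM.minE f' ⟨hs', ?_, hM.cls.nz.mono hs hs' hle, hconn, ?_, ?_, ?_⟩ ?_ ⟨u, v, huv, ?_⟩
  · intro x; rw [hd]; have := hM.cls.diag x; grind
  · obtain ⟨q, hq, h1, h2⟩ := nbr_avoid (hM.d3 u hus) v u
    exact ⟨u, q, by rw [hd]; grind⟩
  · intro x hx
    by_cases h1 : x = u
    · subst h1
      rcases hdu with h | ⟨a, b, h1, _, _, h2, h3, h4, h5, h6, _⟩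
      · exact Or.inl h
      · exact Or.inr ⟨a, b, h1, h2, h3, h4, h5, h6⟩
    by_cases h2 : x = v
    · subst h2
      rcases hdv with h | ⟨a, b, h1, _, _, h2, h3, h4, h5, h6, _⟩
      · exact Or.inl h
      · exact Or.inr ⟨a, b, h1, h2, h3, h4, h5, h6⟩
    left; rw [hNx x h1 h2]; exact hM.d3 x (hsup x hx)
  · have main : ∀ x y, (x = u ∧ y = v) ∨ (x = v ∧ y = u) → (N f' x).card = 2 → N f' x = N f' y →
        False := by
      intro x y hxy hx hxy2
      have hdx : 3 ≤ (N f' x).card ∨ ∃ a b, a ≠ b ∧ a ≠ y ∧ b ≠ y ∧ N f' x = {a, b} ∧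
        f' x a = f' x b ∧
        f' a b = 0 ∧ 3 ≤ (N f' a).card ∧ 3 ≤ (N f' b).card ∧ f a b = 0 ∧ N f x = {y, a, b} := by
        rcases hxy with ⟨rfl, rfl⟩ | ⟨rfl, rfl⟩
        · exact hdu
        · exact hdv
      have hxs : sup f x := by rcases hxy with ⟨rfl, rfl⟩ | ⟨rfl, rfl⟩ <;> assumption
      have hys : sup f y := by rcases hxy with ⟨rfl, rfl⟩ | ⟨rfl, rfl⟩ <;> assumption
      rcases hdx with h | ⟨a, b, h1, h2, h3, h4, _, _, _, _, h5, h6⟩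
      · omega
      have hxa : f x a ≠ 0 := (N_three h6 a).2 (by simp)
      have hxb : f x b ≠ 0 := (N_three h6 b).2 (by simp)
      have hax : a ≠ x := by rintro rfl; exact hxa (hM.cls.diag _)
      have hbx : b ≠ x := by rintro rfl; exact hxb (hM.cls.diag _)
      have hxN : ∀ q, f x q ≠ 0 → q = y ∨ q = a ∨ q = b := fun q hq => (N_three h6 q).1 hq
      have hyN : ∀ q, f y q ≠ 0 → q = x ∨ q = a ∨ q = b := by
        intro q hq
        by_cases hqx : q = x
        · exact Or.inl hqx
        have : q ∈ N f' y := by rw [mem_N, hd]; grind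
        rw [← hxy2, h4] at this
        right; simpa using this
      have has : sup f a := ⟨x, by rwa [hs]⟩
      have hbs : sup f b := ⟨x, by rwa [hs]⟩
      obtain ⟨q, hq, q1, q2⟩ := nbr_avoid (hM.d3 a has) x y
      have := hM.c3 a b h1 has hbs (fun z => z = x ∨ z = y) ?_ x q (Or.inl rfl) hax.symm hbx.symm
        ?_ ?_ hxs ⟨a, by rwa [hs]⟩
      · grind
      · rintro p r hp1 hp2 hr1 hr2 (rfl | rfl) hpr
        · have := hxN r hpr; grind
        · have := hyN r hpr; grind
      · rintro rfl; exact hq (hM.cls.diag _)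
      · rintro rfl; exact hq h5
    intro x y hx hxy
    by_contra hne'
    have h2 : ∀ z, (N f' z).card = 2 → z = u ∨ z = v := by
      intro z hz
      by_contra hc
      push Not at hc
      rw [hNx z hc.1 hc.2] at hz
      have : (N f z).Nonempty := by rw [← Finset.card_pos]; omega
      obtain ⟨q, hq⟩ := this
      have := hM.d3 z ⟨q, mem_N.1 hq⟩
      omega
    have hx' := h2 x hx
    have hy' := h2 y (hxy ▸ hx)
    refine main x y ?_ hx hxy
    grind
  · intro p q h; rw [← hle p q h]; exact h
  · rw [hd]; simp

/-! ### Existence of a good edge -/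

/-- The edge `u v` is good at `u`. -/
def gd (f : V → V → ZMod 3) (u v : V) : Prop :=
  4 ≤ (N f u).card ∨ ∃ a b, a ≠ b ∧ a ≠ v ∧ b ≠ v ∧ N f u = {v, a, b} ∧ f u a = f u b

theorem zpigeon (a b c : ZMod 3) (ha : a ≠ 0) (hb : b ≠ 0) (hc : c ≠ 0) :
    a = b ∨ a = c ∨ b = c := by revert a b c; decide

theorem zneg (a b : ZMod 3) (ha : a ≠ 0) (hb : b ≠ 0) (h : a ≠ b) : a = -b := by
  revert a b; decide

theorem exists_gd (h3 : ∀ v, sup f v → 3 ≤ (N f v).card) {u : V} (hu : sup f u) :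
    ∃ v, f u v ≠ 0 ∧ gd f u v := by
  by_cases h4 : 4 ≤ (N f u).card
  · obtain ⟨q, hq⟩ := hu; exact ⟨q, hq, Or.inl h4⟩
  have hc : (N f u).card = 3 := by have := h3 u hu; omega
  obtain ⟨a, b, c, h1, h2, h3, h⟩ := Finset.card_eq_three.1 hc
  have ha : f u a ≠ 0 := (N_three h a).2 (by simp)
  have hb : f u b ≠ 0 := (N_three h b).2 (by simp)
  have hc : f u c ≠ 0 := (N_three h c).2 (by simp)
  rcases zpigeon _ _ _ ha hb hc with e | e | e
  · refine ⟨c, hc, Or.inr ⟨a, b, h1, h2, h3, ?_, e⟩⟩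
    rw [h]; ext q; simp; tauto
  · refine ⟨b, hb, Or.inr ⟨a, c, h2, h1, h3.symm, ?_, e⟩⟩
    rw [h]; ext q; simp; tauto
  · exact ⟨a, ha, Or.inr ⟨b, c, h3, h1.symm, h2.symm, h, e⟩⟩

theorem good_edge (hM : Mn f) : ∃ u v, f u v ≠ 0 ∧ gd f u v ∧ gd f v u := by
  by_contra hcon
  push Not at hcon
  have hs := hM.cls.symm
  have : ∀ u, ∃ v, sup f u → f u v ≠ 0 ∧ gd f u v := by
    intro u
    by_cases hu : sup f u
    · obtain ⟨v, hv⟩ := exists_gd hM.d3 hu; exact ⟨v, fun _ => hv⟩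
    · exact ⟨u, fun h => absurd h hu⟩
  choose o ho using this
  have hso : ∀ u, sup f u → sup f (o u) := fun u hu => ⟨u, by rw [hs]; exact (ho u hu).1⟩
  have step : ∀ u, sup f u → o (o u) ≠ u ∧ f (o u) (o (o u)) = - f u (o u) := by
    intro u hu
    obtain ⟨h1, h2⟩ := ho u hu
    obtain ⟨h3, h4⟩ := ho (o u) (hso u hu)
    have h5 := hcon u (o u) h1 h2
    have h6 : o (o u) ≠ u := by intro h; rw [h] at h4; exact h5 h4
    refine ⟨h6, ?_⟩
    have h7 : f (o u) u ≠ 0 := by rwa [hs]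
    rw [hs u (o u)]
    refine zneg _ _ h3 h7 ?_
    intro he
    apply h5
    rcases h4 with h4 | ⟨a, b, k1, k2, k3, k4, k5⟩
    · exact Or.inl h4
    · right
      rcases (N_three k4 u).1 h7 with r | r | r
      · exact absurd r.symm h6
      · subst r
        refine ⟨o (o u), b, k3.symm, h6, k1.symm, ?_, by rw [he, k5]⟩
        rw [k4]; ext q; simp; tauto
      · subst r
        refine ⟨o (o u), a, k2.symm, h6, k1, ?_, by rw [he, k5]⟩
        rw [k4]; ext q; simp; tauto
  obtain ⟨u0, hu0⟩ := hM.cls.ne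
  have hsn : ∀ n, sup f (o^[n] u0) := by
    intro n
    induction n with
    | zero => exact hu0
    | succ n ih => rw [Function.iterate_succ_apply']; exact hso _ ih
  obtain ⟨n, m, hnm, he⟩ : ∃ n m : ℕ, n < m ∧ o^[n] u0 = o^[m] u0 := by
    have := not_injective_infinite_finite (fun n : ℕ => o^[n] u0)
    rw [Function.Injective] at this
    push Not at this
    obtain ⟨a, b, h1, h2⟩ := this
    rcases lt_or_gt_of_ne h2 with h | h
    · exact ⟨a, b, h, h1⟩
    · exact ⟨b, a, h, h1.symm⟩
  set x := o^[n] u0 with hx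
  have hxs : ∀ j, sup f (o^[j] x) := by
    intro j; rw [hx, ← Function.iterate_add_apply]; exact hsn _
  have hper : o^[m - n] x = x := by
    rw [hx, ← Function.iterate_add_apply]
    have : m - n + n = m := by omega
    rw [this, ← he]
  have hpp : x ∈ Function.periodicPts o := ⟨m - n, by omega, hper⟩
  have hk0 : 0 < Function.minimalPeriod o x := Function.minimalPeriod_pos_of_mem_periodicPts hpp
  have hkp : o^[Function.minimalPeriod o x] x = x := Function.iterate_minimalPeriod
  have hinj := Function.iterate_injOn_Iio_minimalPeriod (f := o) (x := x)
  generalize Function.minimalPeriod o x = k at *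
  let w : ℕ → V := fun j => o^[j] x
  have w0 : w 0 = x := rfl
  have wk : w k = x := hkp
  have ws : ∀ j, w (j + 1) = o (w j) := fun j => Function.iterate_succ_apply' o j x
  have wsup : ∀ j, sup f (w j) := hxs
  have winj : ∀ i j, i < k → j < k → w i = w j → i = j := fun i j hi hj h => hinj hi hj h
  clear_value w
  have lab : ∀ j, f (w j) (w (j + 1)) = (-1) ^ j * f (w 0) (w 1) := by
    intro j
    induction j with
    | zero => simp
    | succ j ih =>
      have := (step (w j) (wsup j)).2
      rw [← ws, ← ws] at this
      rw [this, ih]; ring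
  have edge : ∀ j, f (w j) (w (j + 1)) ≠ 0 := by
    intro j; rw [ws]; exact (ho _ (wsup j)).1
  have hk3 : 3 ≤ k := by
    by_contra h
    have : k = 1 ∨ k = 2 := by omega
    rcases this with rfl | rfl
    · have := edge 0
      rw [wk, w0] at this; exact this (hM.cls.diag _)
    · have := (step (w 0) (wsup 0)).1
      rw [← ws, ← ws] at this
      exact this (by rw [wk, w0])
  have hkeven : Even k := by
    rw [← Nat.not_odd_iff_even]
    intro hodd
    have h1 := lab k
    have : w (k + 1) = w 1 := by rw [ws, wk, ws, w0]
    rw [this, wk, w0, hodd.neg_one_pow] at h1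
    have h2 := edge 0
    rw [w0] at h2
    apply ne_zero_cases _ h2
    linear_combination h1
  have path : ∀ j, j + 1 < k → ∃ U : Finset V, Pa f (w 1) (w (j + 1)) U
      (if Even j then 0 else - f (w 0) (w 1)) ∧ ∀ z ∈ U, ∃ i, 1 ≤ i ∧ i ≤ j + 1 ∧ z = w i := by
    intro j
    induction j with
    | zero =>
      intro _
      exact ⟨{w 1}, by simpa using Pa.one (f := f) (w 1), fun z hz => ⟨1, le_rfl, le_rfl, by simpa using hz⟩⟩
    | succ j ih =>
      intro hj
      obtain ⟨U, hU, hU2⟩ := ih (by omega)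
      refine ⟨insert (w (j + 2)) U, ?_, ?_⟩
      · have := hU.snoc (edge (j + 1)) (by
          intro h
          obtain ⟨i, h1, h2, h3⟩ := hU2 _ h
          have := winj _ _ hj (by omega) h3
          omega)
        convert this using 1
        rw [lab (j + 1)]
        by_cases he : Even j
        · have : ¬ Even (j + 1) := by rw [Nat.even_add_one]; simpa using he
          rw [if_neg this, if_pos he, (Nat.not_even_iff_odd.1 this).neg_one_pow]; ring
        · have : Even (j + 1) := by rw [Nat.even_add_one]; exact he
          rw [if_pos this, if_neg he, this.neg_one_pow]; ring
      · intro z hz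
        rcases Finset.mem_insert.1 hz with rfl | hz
        · exact ⟨j + 2, by omega, by omega, rfl⟩
        · obtain ⟨i, h1, h2, h3⟩ := hU2 z hz
          exact ⟨i, h1, by omega, h3⟩
  obtain ⟨U, hU, hU2⟩ := path (k - 2) (by omega)
  have e1 : k - 2 + 1 + 1 = k := by omega
  have hev : Even (k - 2) := by
    rw [Nat.even_sub (by omega)]; simpa using hkeven
  rw [if_pos hev] at hU
  have hl := edge (k - 2 + 1)
  have hlab := lab (k - 2 + 1)
  rw [e1, wk, ← w0] at hl hlab
  have hodd : Odd (k - 2 + 1) := hev.add_one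
  rw [hodd.neg_one_pow] at hlab
  refine hM.cls.nz (w 0) U ⟨w 1, w (k - 2 + 1), _, hU, ?_, ?_, edge 0, hl, ?_⟩
  · intro h
    obtain ⟨i, h1, h2, h3⟩ := hU2 _ h
    have := winj 0 i (by omega) (by omega) h3
    omega
  · intro h
    have := winj _ _ (by omega) (by omega) h
    omega
  · rw [hlab]; ring

/-! ### Contracting a path of label zero -/

/-- Delete `c` and `o`; the vertex `β` inherits the neighbours of `o`. -/
noncomputable def zc (f : V → V → ZMod 3) (c o β : V) : V → V → ZMod 3 := fun p q =>
  if p = c ∨ p = o ∨ q = c ∨ q = o ∨ p = q then 0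
  else if p = β then (if f β q ≠ 0 then f β q else f o q)
  else if q = β then (if f β p ≠ 0 then f β p else f o p)
  else f p q

theorem zc_facts (hs : ∀ u v, f u v = f v u) (hdg : ∀ v, f v v = 0) {c o β : V} (hco : c ≠ o)
    (hcb : c ≠ β) (hob : o ≠ β) :
    (∀ p q, zc f c o β p q = zc f c o β q p) ∧ (∀ p, zc f c o β p p = 0) ∧
    (∀ p, zc f c o β c p = 0) ∧ (∀ p, zc f c o β o p = 0) ∧
    (∀ p q, p ≠ c → p ≠ o → q ≠ c → q ≠ o → p ≠ β → q ≠ β → zc f c o β p q = f p q) ∧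
    (∀ q, q ≠ c → q ≠ o → q ≠ β → f β q ≠ 0 → zc f c o β β q = f β q) ∧
    (∀ q, q ≠ c → q ≠ o → q ≠ β → f β q = 0 → zc f c o β β q = f o q) := by
  refine ⟨?_, ?_, ?_, ?_, ?_, ?_, ?_⟩
  · intro p q
    have := hs p q
    simp only [zc]; grind
  all_goals intros; simp only [zc]; grind

theorem zc_nz (hc : Cls f) {c o β : V} (hco : f c o ≠ 0) (hcb : f c β ≠ 0) (hob : o ≠ β)
    (h0 : f c β + f c o = 0) : NZ (zc f c o β) := by
  have hs := hc.symm
  have hco' : c ≠ o := by rintro rfl; exact hco (hc.diag _)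
  have hcb' : c ≠ β := by rintro rfl; exact hcb (hc.diag _)
  obtain ⟨hs', z0, zc', zo, z1, z2, z3⟩ := zc_facts hs hc.diag hco' hcb' hob
  generalize zc f c o β = f' at *
  have hsu : ∀ v W, ZB f' v W → c ∉ insert v W ∧ o ∉ insert v W := by
    intro v W hz
    have := hz.sup hs'
    constructor
    · intro h; obtain ⟨q, hq⟩ := this _ h; exact hq (zc' q)
    · intro h; obtain ⟨q, hq⟩ := this _ h; exact hq (zo q)
  refine NZ.of_vertex hs' β ?_ ?_
  · intro v W hv hW hz
    have hcoW := hsu v W hz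
    refine hc.nz v W (hz.congr hs' hs ?_)
    intro p hp q hq _
    refine z1 p q ?_ ?_ ?_ ?_ ?_ ?_
    all_goals rintro rfl
    all_goals simp_all
  · intro W hz
    have hcoW := hsu β W hz
    simp only [Finset.mem_insert, not_or] at hcoW
    obtain ⟨⟨_, hcW⟩, ⟨_, hoW⟩⟩ := hcoW
    obtain ⟨n1, n2, s, hP, hW, hn, h1, h2, hz⟩ := hz
    have hP' : Pa f n1 n2 W s := by
      refine hP.congr ?_
      intro p hp q hq _
      refine z1 p q ?_ ?_ ?_ ?_ ?_ ?_
      all_goals rintro rfl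
      all_goals contradiction
    have gen : ∀ n ∈ W, (f' β n = f β n) ∨ (f' β n = f o n) := by
      intro n hn
      have a1 : n ≠ c := by rintro rfl; contradiction
      have a2 : n ≠ o := by rintro rfl; contradiction
      have a3 : n ≠ β := by rintro rfl; contradiction
      by_cases h : f β n = 0
      · exact Or.inr (z3 n a1 a2 a3 h)
      · exact Or.inl (z2 n a1 a2 a3 h)
    rw [hs' n2] at h2 hz
    have hoc : f o c ≠ 0 := by rwa [hs]
    rcases gen n1 hP.start_mem with e1 | e1 <;> rcases gen n2 hP.end_mem with e2 | e2 <;>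
      rw [e1] at h1 hz <;> rw [e2] at h2 hz
    · exact hc.nz β W ⟨n1, n2, s, hP', hW, hn, h1, by rwa [hs], by rw [hs n2]; exact hz⟩
    · have p1 := hP'.snoc (c := o) (by rwa [hs]) hoW
      have p2 := p1.snoc (c := c) hoc (by simp [hcW, hco'])
      refine hc.nz β _ ⟨n1, c, _, p2, by simp [hW, hob.symm, hcb'.symm], ?_, h1, hcb, ?_⟩
      · rintro rfl; exact hcW hP.start_mem
      · rw [hs n2, hs o c]; linear_combination hz + h0
    · have p1 := Pa.cons h1 hoW hP'
      have p2 := Pa.cons hco (by simp [hcW, hco']) p1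
      refine hc.nz β _ ⟨c, n2, _, p2, by simp [hW, hob.symm, hcb'.symm], ?_, by rwa [hs],
        by rwa [hs], ?_⟩
      · rintro rfl; exact hcW hP.end_mem
      · rw [hs n2, hs β c]; linear_combination hz + h0
    · exact hc.nz o W ⟨n1, n2, s, hP', hoW, hn, h1, by rwa [hs], by rw [hs n2]; exact hz⟩

/-- Lemma Z. -/
theorem Mn.Z (hM : Mn f) {c o β d : V} (hN : N f c = {β, o, d}) (hbo : β ≠ o) (hbd : β ≠ d)
    (hod : o ≠ d) (h0 : f c β + f c o = 0) (hfod : f o d ≠ 0) (hfbo : f β o = 0)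
    (hfbd : f β d = 0)
    (hv : ∀ v, v ≠ c → v ≠ d → f o v ≠ 0 → f β v ≠ 0 → 4 ≤ (N f v).card)
    (hd : 4 ≤ (N f d).card ∨ ∃ a, a ≠ c ∧ a ≠ o ∧ N f d = {c, o, a} ∧ f d a = f o d ∧ f β a = 0 ∧
      f o a = 0) : False := by
  have hs := hM.cls.symm
  have hdg := hM.cls.diag
  have hcN := N_three hN
  have hco : f c o ≠ 0 := (hcN o).2 (by simp)
  have hcb : f c β ≠ 0 := (hcN β).2 (by simp)
  have hcd : f c d ≠ 0 := (hcN d).2 (by simp)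
  have hco' : c ≠ o := by rintro rfl; exact hco (hdg _)
  have hcb' : c ≠ β := by rintro rfl; exact hcb (hdg _)
  have hcd' : c ≠ d := by rintro rfl; exact hcd (hdg _)
  have hnz := zc_nz hM.cls hco hcb hbo.symm h0
  obtain ⟨hs', z0, zc', zo, z1, z2, z3⟩ := zc_facts hs hdg hco' hcb' hbo.symm
  generalize zc f c o β = f' at *
  have hbs : sup f β := ⟨c, by rwa [hs]⟩
  have hos : sup f o := ⟨c, by rwa [hs]⟩
  have hds : sup f d := ⟨c, by rwa [hs]⟩
  have hcs : sup f c := ⟨_, hco⟩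
  -- nonadjacency description
  have adjb : ∀ q, f' β q ≠ 0 ↔ q ≠ c ∧ q ≠ o ∧ q ≠ β ∧ (f β q ≠ 0 ∨ f o q ≠ 0) := by
    intro q
    by_cases a1 : q = c
    · rw [a1, hs', zc']; simp
    by_cases a2 : q = o
    · rw [a2, hs', zo]; simp
    by_cases a3 : q = β
    · rw [a3, z0]; simp
    by_cases h : f β q = 0
    · rw [z3 q a1 a2 a3 h]; simp [*]
    · rw [z2 q a1 a2 a3 h]; simp [*]
  have adjb' : ∀ q, f' q β ≠ 0 ↔ q ≠ c ∧ q ≠ o ∧ q ≠ β ∧ (f β q ≠ 0 ∨ f o q ≠ 0) := by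
    intro q; rw [hs']; exact adjb q
  have hsup : ∀ v, sup f' v → v ≠ c ∧ v ≠ o ∧ sup f v := by
    rintro v ⟨q, hq⟩
    have a1 : v ≠ c := by rintro rfl; exact hq (zc' _)
    have a2 : v ≠ o := by rintro rfl; exact hq (zo _)
    have a3 : q ≠ c := by rintro rfl; rw [hs'] at hq; exact hq (zc' _)
    have a4 : q ≠ o := by rintro rfl; rw [hs'] at hq; exact hq (zo _)
    refine ⟨a1, a2, ?_⟩
    by_cases b1 : v = β
    · rw [b1]; exact hbs
    by_cases b2 : q = β
    · rw [b2] at hq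
      rcases ((adjb' v).1 hq).2.2.2 with h | h
      · exact ⟨β, by rwa [hs]⟩
      · exact ⟨o, by rwa [hs]⟩
    · exact ⟨q, by rwa [z1 v q a1 a2 a3 a4 b1 b2] at hq⟩
  have adj : ∀ v q, v ≠ c → v ≠ o → v ≠ β → (f' v q ≠ 0 ↔
      q ≠ c ∧ q ≠ o ∧ ((q ≠ β ∧ f v q ≠ 0) ∨ (q = β ∧ (f β v ≠ 0 ∨ f o v ≠ 0)))) := by
    intro v q a1 a2 a3
    by_cases b1 : q = c
    · rw [b1, hs', zc']; simp
    by_cases b2 : q = o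
    · rw [b2, hs', zo]; simp
    by_cases b3 : q = β
    · rw [b3, adjb']; simp [*, hcb'.symm]
    · rw [z1 v q a1 a2 b1 b2 a3 b3]; simp [*]
  have degb : 3 ≤ (N f' β).card := by
    have h3 := hM.d3 β hbs
    have hsub : insert d ((N f β).erase c) ⊆ N f' β := by
      intro q hq
      rw [mem_N, adjb]
      rw [Finset.mem_insert, Finset.mem_erase, mem_N] at hq
      have := hdg β
      grind
    have := Finset.card_le_card hsub
    rw [Finset.card_insert_of_notMem (by simp [mem_N, hfbd]),
      Finset.card_erase_of_mem (by rw [mem_N, hs]; exact hcb)] at this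
    omega
  have degv : ∀ v, v ≠ c → v ≠ o → v ≠ β → v ≠ d → sup f v → 3 ≤ (N f' v).card := by
    intro v a1 a2 a3 a4 hvs
    have hcv : f v c = 0 := by
      by_contra h; rw [hs] at h; have := (hcN v).1 h; grind
    have h3 := hM.d3 v hvs
    by_cases hov : f o v = 0
    · have hsub : N f v ⊆ N f' v := by
        intro q hq
        rw [mem_N] at *
        rw [adj v q a1 a2 a3]
        have := hs o v
        have := hs β v
        grind
      exact h3.trans (Finset.card_le_card hsub)
    by_cases hbv : f β v = 0
    · have hsub : insert β ((N f v).erase o) ⊆ N f' v := by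
        intro q hq
        rw [Finset.mem_insert, Finset.mem_erase, mem_N] at hq
        rw [mem_N, adj v q a1 a2 a3]
        grind
      have := Finset.card_le_card hsub
      rw [Finset.card_insert_of_notMem (by simp [mem_N, hs v, hbv]),
        Finset.card_erase_of_mem (by rw [mem_N, hs]; exact hov)] at this
      omega
    · have h4 := hv v a1 a4 hov hbv
      have hsub : (N f v).erase o ⊆ N f' v := by
        intro q hq
        rw [Finset.mem_erase, mem_N] at hq
        rw [mem_N, adj v q a1 a2 a3]
        grind
      have := Finset.card_le_card hsub
      rw [Finset.card_erase_of_mem (by rw [mem_N, hs]; exact hov)] at this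
      omega
  have degne : ∀ v, sup f' v → v ≠ d → 3 ≤ (N f' v).card := by
    intro v hvs hvd
    obtain ⟨a1, a2, a3⟩ := hsup v hvs
    by_cases hb : v = β
    · rw [hb]; exact degb
    · exact degv v a1 a2 hb hvd a3
  refine hM.minS f' ⟨hs', z0, hnz, ?_, ⟨β, d, ?_⟩, ?_, ?_⟩ ?_
  · intro w hw S hS a b ha haw hbw has hbs'
    obtain ⟨w1, w2, w3⟩ := hsup w hw
    obtain ⟨a1, a2, a3⟩ := hsup a has
    obtain ⟨b1, b2, b3⟩ := hsup b hbs'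
    by_cases hwb : w = β
    · subst hwb
      have := hM.c3 w o hbo hbs hos (fun v => (v ≠ c ∧ S v) ∨ (v = c ∧ S d)) ?_ a b
        (Or.inl ⟨a1, ha⟩) haw a2 hbw b2 a3 b3
      · rcases this with h | h
        · exact h.2
        · exact absurd h.1 b1
      · intro p q p1 p2 q1 q2 hSp hpq
        by_cases hpc : p = c
        · subst hpc
          have := (hcN q).1 hpq
          grind
        by_cases hqc : q = c
        · subst hqc
          rw [hs] at hpq
          have := (hcN p).1 hpq
          grind
        have := hS p q p1 q1
        rw [z1 p q hpc p2 hqc q2 p1 q1] at this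
        grind
    · have := hM.cls.conn w w3 (fun v => (v ≠ c ∧ v ≠ o ∧ S v) ∨ ((v = c ∨ v = o) ∧ S β)) ?_ a b
        (Or.inl ⟨a1, a2, ha⟩) haw hbw a3 b3
      · rcases this with h | h
        · exact h.2.2
        · tauto
      · intro p q p1 q1 hSp hpq
        have hfd : f' β d ≠ 0 := by rw [adjb]; grind
        by_cases hp : p = c ∨ p = o
        · have hSb : S β := by grind
          by_cases hq : q = c ∨ q = o
          · exact Or.inr ⟨hq, hSb⟩
          push Not at hq
          refine Or.inl ⟨hq.1, hq.2, ?_⟩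
          by_cases hqb : q = β
          · rwa [hqb]
          refine hS β q (Ne.symm hwb) q1 hSb ?_
          rw [adjb]
          rcases hp with rfl | rfl
          · have := (hcN q).1 hpq; grind
          · grind
        · push Not at hp
          have hSp' : S p := by grind
          by_cases hq : q = c ∨ q = o
          · refine Or.inr ⟨hq, ?_⟩
            by_cases hpb : p = β
            · rwa [← hpb]
            refine hS p β p1 (Ne.symm hwb) hSp' ?_
            rw [adjb']
            rcases hq with rfl | rfl
            · rw [hs] at hpq
              have := (hcN p).1 hpq; grind
            · rw [hs] at hpq; grind
          · push Not at hq
            refine Or.inl ⟨hq.1, hq.2, hS p q p1 q1 hSp' ?_⟩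
            by_cases hpb : p = β
            · rw [hpb, adjb]
              have := hdg β
              grind
            · rw [adj p q hp.1 hp.2 hpb]
              have := hs p β
              grind
  · rw [adjb]; grind
  · intro v hvs
    by_cases hvd : v = d
    · subst hvd
      rcases hd with h4 | ⟨a, a1, a2, hNd, e1, e2, e3⟩
      · left
        have hsub : insert β (((N f v).erase c).erase o) ⊆ N f' v := by
          intro q hq
          rw [Finset.mem_insert, Finset.mem_erase, Finset.mem_erase, mem_N] at hq
          rw [mem_N, adj v q hcd'.symm hod.symm hbd.symm]
          grind
        have := Finset.card_le_card hsub
        rw [Finset.card_insert_of_notMem (by simp [mem_N, hs v, hfbd]),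
          Finset.card_erase_of_mem (by
            rw [Finset.mem_erase, mem_N, hs]; exact ⟨hco'.symm, hfod⟩),
          Finset.card_erase_of_mem (by rw [mem_N, hs]; exact hcd)] at this
        omega
      · right
        have hdN := N_three hNd
        have hva : f v a ≠ 0 := (hdN a).2 (by simp)
        have hab : a ≠ β := by rintro rfl; rw [hs] at hva; exact hva hfbd
        have hav : a ≠ v := by rintro rfl; exact hva (hdg _)
        have hNv : N f' v = {β, a} := by
          ext q
          have := hdN q
          rw [mem_N, adj v q hcd'.symm hod.symm hbd.symm, Finset.mem_insert, Finset.mem_singleton]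
          grind
        refine ⟨β, a, hab.symm, hNv, ?_, ?_, degb, ?_⟩
        · rw [hs', z3 v hcd'.symm hod.symm hbd.symm hfbd,
            z1 v a hcd'.symm hod.symm a1 a2 hbd.symm hab, e1]
        · rw [z3 a a1 a2 hab e2, e3]
        · exact degv a a1 a2 hab hav ⟨v, by rwa [hs]⟩
    · exact Or.inl (degne v hvs hvd)
  · have h2 : ∀ v, (N f' v).card = 2 → v = d := by
      intro v hc2
      by_contra hvd
      have : (N f' v).Nonempty := by rw [← Finset.card_pos]; omega
      obtain ⟨q, hq⟩ := this
      have := degne v ⟨q, mem_N.1 hq⟩ hvd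
      omega
    intro u v hu huv
    rw [h2 u hu, h2 v (huv ▸ hu)]
  · rw [Finset.ssubset_iff_of_subset]
    · refine ⟨c, mem_supp.2 hcs, ?_⟩
      rw [mem_supp]
      intro h; exact (hsup c h).1 rfl
    · intro v hv
      rw [mem_supp] at *
      exact (hsup v hv).2.2

/-! ### The final analysis -/

theorem zsum (t s : ZMod 3) (ht : t ≠ 0) (hs : s ≠ 0) : s = t ∨ s = -t := by
  revert t s; decide

theorem noadj_arith (t e : ZMod 3) (ht : t ≠ 0) (h1 : -t + t + -t + e ≠ 0) (h2 : -t + t + -t + -t + e ≠ 0) :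
    e = 0 := by
  revert t e; decide

theorem k4_arith (t a b c : ZMod 3) (ht : t ≠ 0) (ha : a ≠ 0) (hb : b ≠ 0) (hc : c ≠ 0)
    (h1 : t + b + a ≠ 0) (h2 : -t + c + b ≠ 0) (h3 : t + -t + c + a ≠ 0)
    (h4 : t + -t + b + a ≠ 0) : False := by
  revert t a b c; decide

theorem noadj (hc : Cls f) {x x1 y z y1 : V} {t : ZMod 3} (ht : t ≠ 0)
    (hn : [x1, x, z, y, y1].Nodup) (e1 : f x x1 = -t) (e2 : f x y = t) (e3 : f x z = t)
    (e4 : f y z = -t) (e5 : f y y1 = -t) : f x1 y1 = 0 := by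
  by_contra h
  have hs := hc.symm
  have hnt : -t ≠ 0 := neg_ne_zero.2 ht
  have hn4 : [x1, x, y, y1].Nodup := by
    simp only [List.nodup_cons, List.mem_cons, List.not_mem_nil, or_false, not_or] at hn ⊢
    tauto
  rw [hs] at e1 e4 h
  have h1 := hc.nz.c4 (by rwa [e1]) (by rwa [e2]) (by rwa [e5]) h hn4
  have h2 := hc.nz.c5 (by rwa [e1]) (by rwa [e3]) (by rwa [e4]) (by rwa [e5]) h hn
  rw [e1, e2, e5] at h1
  rw [e1, e3, e4, e5] at h2
  exact h (noadj_arith _ _ ht h1 h2)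

theorem cut2 (hM : Mn f) {a b c m q : V} (ha : N f a = {b, c, m}) (hb : N f b = {a, c, m})
    (hcm : c ≠ m) (hq : f c q ≠ 0) (hqa : q ≠ a) (hqb : q ≠ b) (hqm : q ≠ m) : False := by
  have hs := hM.cls.symm
  have hdg := hM.cls.diag
  have haN := N_three ha
  have hbN := N_three hb
  have hac : f a c ≠ 0 := (haN c).2 (by simp)
  have ham : f a m ≠ 0 := (haN m).2 (by simp)
  have := hM.c3 c m hcm ⟨a, by rwa [hs]⟩ ⟨a, by rwa [hs]⟩ (fun v => v = a ∨ v = b) ?_ a q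
    (Or.inl rfl) (by rintro rfl; exact hac (hdg _)) (by rintro rfl; exact ham (hdg _))
    (by rintro rfl; exact hq (hdg _)) hqm ⟨c, hac⟩ ⟨c, by rwa [hs]⟩
  · grind
  · rintro p r p1 p2 r1 r2 (rfl | rfl) hpr
    · have := (haN r).1 hpr; grind
    · have := (hbN r).1 hpr; grind

theorem third {x a b : V} (h : (N f x).card = 3) (ha : f x a ≠ 0) (hb : f x b ≠ 0)
    (hab : a ≠ b) : ∃ c, c ≠ a ∧ c ≠ b ∧ N f x = {a, b, c} := by
  have hsub : ({a, b} : Finset V) ⊆ N f x := by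
    intro q hq
    simp only [Finset.mem_insert, Finset.mem_singleton] at hq
    rw [mem_N]
    rcases hq with rfl | rfl <;> assumption
  have h1 : (N f x \ {a, b}).card = 1 := by
    rw [Finset.card_sdiff_of_subset hsub, h, Finset.card_pair hab]
  obtain ⟨c, hc⟩ := Finset.card_eq_one.1 h1
  have hc' : ∀ q, (q ∈ N f x ∧ ¬ (q = a ∨ q = b)) ↔ q = c := by
    intro q
    have : q ∈ N f x \ {a, b} ↔ q ∈ ({c} : Finset V) := by rw [hc]
    simpa using this
  have hcc := (hc' c).2 rfl
  refine ⟨c, fun h => hcc.2 (Or.inl h), fun h => hcc.2 (Or.inr h), ?_⟩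
  ext q
  have h2 := hc' q
  have h3 : q = a → q ∈ N f x := by rintro rfl; exact mem_N.2 ha
  have h4 : q = b → q ∈ N f x := by rintro rfl; exact mem_N.2 hb
  simp only [Finset.mem_insert, Finset.mem_singleton]
  tauto

theorem rot1 (a b c : V) : ({a, b, c} : Finset V) = {c, a, b} := by ext; simp; tauto
theorem rot2 (a b c : V) : ({a, b, c} : Finset V) = {b, c, a} := by ext; simp; tauto
theorem sw12 (a b c : V) : ({a, b, c} : Finset V) = {b, a, c} := by ext; simp; tauto
theorem sw23 (a b c : V) : ({a, b, c} : Finset V) = {a, c, b} := by ext; simp; tauto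
theorem sw13 (a b c : V) : ({a, b, c} : Finset V) = {c, b, a} := by ext; simp; tauto

/-- Case A: `z` has degree at least four. -/
theorem caseA (hM : Mn f) {x x1 y y1 z : V} {t : ZMod 3} (ht : t ≠ 0) (hx : N f x = {x1, y, z})
    (hy : N f y = {x, z, y1}) (hx1y : x1 ≠ y) (hx1z : x1 ≠ z) (hyz : y ≠ z) (hy1x : y1 ≠ x)
    (hy1z : y1 ≠ z) (e2 : f x y = t) (e3 : f x z = t) (e4 : f y z = -t) (hz : 4 ≤ (N f z).card)
    (hg : gd f x1 x) : False := by
  have hs := hM.cls.symm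
  have hdg := hM.cls.diag
  have hnt : -t ≠ 0 := neg_ne_zero.2 ht
  have hxN := N_three hx
  have hyN := N_three hy
  have hxx1 : f x x1 ≠ 0 := (hxN x1).2 (by simp)
  have hyy1 : f y y1 ≠ 0 := (hyN y1).2 (by simp)
  have nxx1 : x ≠ x1 := by rintro rfl; exact hxx1 (hdg _)
  have nyy1 : y ≠ y1 := by rintro rfl; exact hyy1 (hdg _)
  have nxy : x ≠ y := by rintro rfl; exact ht (by rw [← e2, hdg])
  have nxz : x ≠ z := by rintro rfl; exact ht (by rw [← e3, hdg])
  have hxy0 : f x z ≠ 0 := by rwa [e3]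
  have hyz0 : f y z ≠ 0 := by rwa [e4]
  have hx1y1 : x1 ≠ y1 := by
    rintro rfl
    obtain ⟨q, hq, q1, q2, q3⟩ := nbr_avoid3 hz x y x1
    exact cut2 hM (hx.trans (rot2 _ _ _)) hy hx1z.symm hq q1 q2 q3
  have f1 : f y x1 = 0 := by
    by_contra h; have := (hyN x1).1 h; grind
  have f2 : f x y1 = 0 := by
    by_contra h; have := (hxN y1).1 h; grind
  have p : f x x1 = -t := by
    rcases zsum t _ ht hxx1 with h | h
    · exfalso
      refine hM.E (u := z) (v := x) (by rwa [hs]) (Or.inl hz)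
        (Or.inr ⟨y, x1, hx1y.symm, hyz, hx1z, hx.trans (sw13 _ _ _), by rw [e2, h], f1⟩)
    · exact h
  have q : f y y1 = -t := by
    rcases zsum t _ ht hyy1 with h | h
    · exfalso
      refine hM.E (u := z) (v := y) (by rwa [hs]) (Or.inl hz)
        (Or.inr ⟨x, y1, hy1x.symm, nxz, hy1z, hy.trans (sw12 _ _ _), by rw [hs y x, e2, h], f2⟩)
    · exact h
  have g1 : f x1 y1 = 0 := noadj hM.cls ht (by
    simp only [List.nodup_cons, List.mem_cons, List.not_mem_nil, or_false, not_or]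
    grind) p e2 e3 e4 q
  have g2 : f x1 z = 0 := by
    by_contra h
    have hx1s : sup f x1 := ⟨z, h⟩
    by_cases h4 : 4 ≤ (N f x1).card
    · exact hM.E h (Or.inl h4) (Or.inl hz)
    have h3 : (N f x1).card = 3 := by have := hM.d3 x1 hx1s; omega
    obtain ⟨w, w1, w2, hw⟩ := third h3 (by rwa [hs]) h nxz
    have hwN := N_three hw
    have hx1w : f x1 w ≠ 0 := (hwN w).2 (by simp)
    have nw : w ≠ x1 := by rintro rfl; exact hx1w (hdg _)
    have e : f x1 z = -t := by
      rcases zsum t _ ht h with h' | h'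
      · exfalso
        have := hM.cls.nz.c4 (a := x1) (b := x) (c := y) (d := z) (by rwa [hs]) (by rwa [e2])
          hyz0 (by rwa [hs]) (by
            simp only [List.nodup_cons, List.mem_cons, List.not_mem_nil, or_false, not_or]
            grind)
        apply this
        rw [hs x1 x, p, e2, e4, hs z x1, h']; ring
      · exact h'
    have ew : f x1 w = -t := by
      rcases hg with hg | ⟨a, b, k1, k2, k3, k4, k5⟩
      · omega
      · have hk := N_three k4
        have ha : a = x ∨ a = z ∨ a = w := (hwN a).1 ((hk a).2 (by simp))
        have hb : b = x ∨ b = z ∨ b = w := (hwN b).1 ((hk b).2 (by simp))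
        grind
    have fxw : f x w = 0 := by
      by_contra h'
      have a1 := (hxN w).1 h'
      have a2 : w = y := by grind
      subst a2
      rw [hs] at hx1w
      exact hx1w f1
    refine hM.E (u := z) (v := x1) (by rwa [hs]) (Or.inl hz)
      (Or.inr ⟨x, w, w1.symm, nxz, w2, hw.trans (sw12 _ _ _), by rw [hs x1 x, p, ew], fxw⟩)
  refine hM.Z (c := x) (o := y) (β := x1) (d := z) hx hx1y hx1z hyz (by rw [p, e2]; ring) hyz0
    (by rwa [hs]) g2 ?_ (Or.inl hz)
  intro v v1 v2 v3 v4
  have := (hyN v).1 v3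
  have : v = y1 := by grind
  subst this
  exact absurd g1 v4

theorem caseB1 (hM : Mn f) {x x1 y y1 z z1 : V} {t : ZMod 3} (ht : t ≠ 0)
    (hx : N f x = {x1, y, z}) (hy : N f y = {x, z, y1}) (hz : N f z = {x, y, z1})
    (hn : [x, y, z, x1, y1, z1].Nodup) (e2 : f x y = t) (e3 : f x z = t) (e4 : f y z = -t)
    (p : f x x1 = -t) (q : f y y1 = -t) : False := by
  have hs := hM.cls.symm
  have hdg := hM.cls.diag
  have hnt : -t ≠ 0 := neg_ne_zero.2 ht
  have hxN := N_three hx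
  have hyN := N_three hy
  have hzN := N_three hz
  simp only [List.nodup_cons, List.mem_cons, List.not_mem_nil, or_false, not_or] at hn
  have g1 : f x1 y1 = 0 := noadj hM.cls ht (by
    simp only [List.nodup_cons, List.mem_cons, List.not_mem_nil, or_false, not_or]
    grind) p e2 e3 e4 q
  have fzx1 : f z x1 = 0 := by by_contra h; have := (hzN x1).1 h; grind
  have fyx1 : f y x1 = 0 := by by_contra h; have := (hyN x1).1 h; grind
  have fzy1 : f z y1 = 0 := by by_contra h; have := (hzN y1).1 h; grind
  have fxy1 : f x y1 = 0 := by by_contra h; have := (hxN y1).1 h; grind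
  have fxz1 : f x z1 = 0 := by by_contra h; have := (hxN z1).1 h; grind
  have hzz1 : f z z1 ≠ 0 := (hzN z1).2 (by simp)
  have hyy1 : f y y1 ≠ 0 := (hyN y1).2 (by simp)
  have hxx1 : f x x1 ≠ 0 := (hxN x1).2 (by simp)
  by_cases bad : f x1 z1 ≠ 0 ∧ ¬ 4 ≤ (N f z1).card
  · obtain ⟨b1, b2⟩ := bad
    have r : f z z1 = t := by
      rcases zsum t _ ht hzz1 with h | h
      · exact h
      · exact absurd (noadj hM.cls ht (by
          simp only [List.nodup_cons, List.mem_cons, List.not_mem_nil, or_false, not_or]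
          grind) p e3 e2 (by rw [hs]; exact e4) h) b1
    have g2 : f y1 z1 = 0 := by
      by_contra h
      have hz1s : sup f z1 := ⟨z, by rwa [hs]⟩
      have h3 : (N f z1).card = 3 := by have := hM.d3 z1 hz1s; omega
      obtain ⟨w, w1, w2, hw⟩ := third (a := z) (b := x1) h3 (by rwa [hs]) (by rwa [hs]) (by grind)
      have hwN := N_three hw
      have hwy : y1 = w := by
        have := (hwN y1).1 (by rwa [hs]); grind
      subst hwy
      have hy1s : sup f y1 := ⟨z1, h⟩
      have hx1s : sup f x1 := ⟨z1, b1⟩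
      obtain ⟨u, hu, u1, u2⟩ := nbr_avoid (hM.d3 y1 hy1s) y z1
      have := hM.c3 x1 y1 (by grind) hx1s hy1s (fun v => v = x ∨ v = y ∨ v = z ∨ v = z1) ?_ x u
        (Or.inl rfl) (by grind) (by grind) (by rintro rfl; rw [hs] at hu; exact hu g1)
        (by rintro rfl; exact hu (hdg _)) ⟨_, hxx1⟩ ⟨y1, by rwa [hs]⟩
      · rcases this with rfl | rfl | rfl | rfl
        · rw [hs] at hu; exact hu fxy1
        · exact u1 rfl
        · rw [hs] at hu; exact hu fzy1
        · exact u2 rfl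
      · rintro a b a1 a2 b1 b2 (rfl | rfl | rfl | rfl) hab
        · have := (hxN b).1 hab; grind
        · have := (hyN b).1 hab; grind
        · have := (hzN b).1 hab; grind
        · have := (hwN b).1 hab; grind
    refine hM.Z (c := y) (o := x) (β := y1) (d := z) (hy.trans (by ext; simp; tauto)) (by grind)
      (by grind) (by grind) (by rw [q, hs y x, e2]; ring) (by rwa [e3]) (by rwa [hs]) (by rwa [hs])
      ?_ (Or.inr ⟨z1, by grind, by grind, hz.trans (sw12 _ _ _), by rw [r, e3], g2, fxz1⟩)
    intro v v1 v2 v3 v4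
    have := (hxN v).1 v3
    have : v = x1 := by grind
    subst this
    rw [hs] at v4
    exact absurd g1 v4
  · refine hM.Z (c := x) (o := z) (β := x1) (d := y) (hx.trans (sw23 _ _ _)) (by grind)
      (by grind) (by grind) (by rw [p, e3]; ring) (by rwa [hs, e4]) (by rwa [hs]) (by rwa [hs])
      ?_ (Or.inr ⟨y1, by grind, by grind, hy, by rw [q, hs z y, e4], g1, fzy1⟩)
    intro v v1 v2 v3 v4
    have := (hzN v).1 v3
    have : v = z1 := by grind
    subst this
    push Not at bad
    exact bad v4

theorem caseB (hM : Mn f) {x x1 y y1 z z1 : V} {t : ZMod 3} (ht : t ≠ 0)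
    (hx : N f x = {x1, y, z}) (hy : N f y = {x, z, y1}) (hz : N f z = {x, y, z1})
    (hx1y : x1 ≠ y) (hx1z : x1 ≠ z) (hyz : y ≠ z) (hy1x : y1 ≠ x)
    (hy1z : y1 ≠ z) (hz1x : z1 ≠ x) (hz1y : z1 ≠ y)
    (e2 : f x y = t) (e3 : f x z = t) (e4 : f y z = -t) : False := by
  have hs := hM.cls.symm
  have hdg := hM.cls.diag
  have hnt : -t ≠ 0 := neg_ne_zero.2 ht
  have hxN := N_three hx
  have hyN := N_three hy
  have hzN := N_three hz
  have hxx1 : f x x1 ≠ 0 := (hxN x1).2 (by simp)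
  have hyy1 : f y y1 ≠ 0 := (hyN y1).2 (by simp)
  have hzz1 : f z z1 ≠ 0 := (hzN z1).2 (by simp)
  have nxx1 : x ≠ x1 := by rintro rfl; exact hxx1 (hdg _)
  have nyy1 : y ≠ y1 := by rintro rfl; exact hyy1 (hdg _)
  have nzz1 : z ≠ z1 := by rintro rfl; exact hzz1 (hdg _)
  have nxy : x ≠ y := by rintro rfl; exact ht (by rw [← e2, hdg])
  have nxz : x ≠ z := by rintro rfl; exact ht (by rw [← e3, hdg])
  have hxy0 : f x y ≠ 0 := by rwa [e2]
  have hxz0 : f x z ≠ 0 := by rwa [e3]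
  have hyz0 : f y z ≠ 0 := by rwa [e4]
  have d1 : x1 ≠ y1 := by
    rintro rfl
    by_cases h : z1 = x1
    · subst h
      have h1 := hM.cls.nz.c3 hxy0 hyy1 (by rwa [hs]) nxy nyy1 nxx1
      have h2 := hM.cls.nz.c3 hyz0 hzz1 (by rwa [hs]) hyz nzz1 nyy1
      have h3 := hM.cls.nz.c4 hxy0 hyz0 hzz1 (by rwa [hs]) (by
        simp only [List.nodup_cons, List.mem_cons, List.not_mem_nil, or_false, not_or]; grind)
      have h4 := hM.cls.nz.c4 hxz0 (by rwa [hs]) hyy1 (by rwa [hs]) (by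
        simp only [List.nodup_cons, List.mem_cons, List.not_mem_nil, or_false, not_or]; grind)
      rw [e2, hs z1 x] at h1
      rw [e4, hs z1 y] at h2
      rw [e2, e4, hs z1 x] at h3
      rw [e3, hs z y, e4, hs z1 x] at h4
      exact k4_arith t _ _ _ ht hxx1 hyy1 hzz1 h1 h2 h3 h4
    · exact cut2 hM (hx.trans (rot2 _ _ _)) hy hx1z.symm hzz1 hz1x hz1y h
  have d2 : x1 ≠ z1 := by
    rintro rfl
    exact cut2 hM (hx.trans (by ext; simp; tauto : _ = ({z, y, x1} : Finset V))) hz hx1y.symm hyy1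
      hy1x hy1z d1.symm
  have d3 : y1 ≠ z1 := by
    rintro rfl
    exact cut2 hM (hy.trans (sw12 _ _ _)) (hz.trans (sw12 _ _ _)) hy1x.symm hxx1 hx1y hx1z d1
  have fzx1 : f z x1 = 0 := by by_contra h; have := (hzN x1).1 h; grind
  have fyx1 : f y x1 = 0 := by by_contra h; have := (hyN x1).1 h; grind
  have fzy1 : f z y1 = 0 := by by_contra h; have := (hzN y1).1 h; grind
  have fxy1 : f x y1 = 0 := by by_contra h; have := (hxN y1).1 h; grind
  have fxz1 : f x z1 = 0 := by by_contra h; have := (hxN z1).1 h; grind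
  have fyz1 : f y z1 = 0 := by by_contra h; have := (hyN z1).1 h; grind
  have E1 : f x x1 = t → f y y1 = -t → False := by
    intro h1 h2
    exact hM.E hxy0
      (Or.inr ⟨z, x1, hx1z.symm, hyz.symm, hx1y, hx.trans (by ext; simp; tauto), by rw [e3, h1],
        fzx1⟩)
      (Or.inr ⟨z, y1, hy1z.symm, nxz.symm, hy1x, hy, by rw [e4, h2], fzy1⟩)
  have E2 : f x x1 = t → f z z1 = -t → False := by
    intro h1 h2
    exact hM.E hxz0
      (Or.inr ⟨y, x1, hx1y.symm, hyz, hx1z, hx.trans (sw13 _ _ _), by rw [e2, h1], fyx1⟩)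
      (Or.inr ⟨y, z1, hz1y.symm, nxy.symm, hz1x, hz, by rw [hs z y, e4, h2], fyz1⟩)
  have E3 : f y y1 = t → f z z1 = t → False := by
    intro h1 h2
    exact hM.E hyz0
      (Or.inr ⟨x, y1, hy1x.symm, nxz, hy1z, hy.trans (sw12 _ _ _), by rw [hs y x, e2, h1], fxy1⟩)
      (Or.inr ⟨x, z1, hz1x.symm, nxy, hz1y, hz.trans (sw12 _ _ _), by rw [hs z x, e3, h2], fxz1⟩)
  have hp : f x x1 = -t := by
    rcases zsum t _ ht hxx1 with h | h
    · rcases zsum t _ ht hyy1 with h' | h'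
      · rcases zsum t _ ht hzz1 with h'' | h''
        · exact (E3 h' h'').elim
        · exact (E2 h h'').elim
      · exact (E1 h h').elim
    · exact h
  rcases zsum t _ ht hyy1 with h' | h'
  · rcases zsum t _ ht hzz1 with h'' | h''
    · exact E3 h' h''
    · exact caseB1 hM ht (hx.trans (sw23 _ _ _)) hz hy (by
        simp only [List.nodup_cons, List.mem_cons, List.not_mem_nil, or_false, not_or]; grind)
        e3 e2 (by rw [hs]; exact e4) hp h''
  · exact caseB1 hM ht hx hy hz (by
        simp only [List.nodup_cons, List.mem_cons, List.not_mem_nil, or_false, not_or]; grind)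
        e2 e3 e4 hp h'

theorem tri1 (hM : Mn f) {x x1 y z : V} (hx : N f x = {x1, y, z}) (hx1y : x1 ≠ y)
    (hx1z : x1 ≠ z) (hyz : y ≠ z) (he : f x y = f x z) (h : f y z ≠ 0) (hg : gd f x1 x)
    (hy : (N f y).card = 3) : False := by
  have hs := hM.cls.symm
  have hdg := hM.cls.diag
  have hxN := N_three hx
  have hxy : f x y ≠ 0 := (hxN y).2 (by simp)
  have hxz : f x z ≠ 0 := (hxN z).2 (by simp)
  have nxy : x ≠ y := by rintro rfl; exact hxy (hdg _)
  have nxz : x ≠ z := by rintro rfl; exact hxz (hdg _)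
  have e4 : f y z = - f x y := by
    rcases zsum (f x y) _ hxy h with h' | h'
    · exfalso
      apply hM.cls.nz.c3 hxy h (by rwa [hs]) nxy hyz nxz
      rw [h', hs z x, ← he]
      have : (3 : ZMod 3) = 0 := by decide
      linear_combination f x y * this
    · exact h'
  obtain ⟨y1, y1x, y1z, hy'⟩ := third (a := x) (b := z) hy (by rwa [hs]) h nxz
  by_cases hz4 : 4 ≤ (N f z).card
  · exact caseA hM hxy hx hy' hx1y hx1z hyz y1x y1z rfl he.symm e4 hz4 hg
  · have hz : (N f z).card = 3 := by have := hM.d3 z ⟨x, by rwa [hs]⟩; omega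
    obtain ⟨z1, z1x, z1y, hz'⟩ := third (a := x) (b := y) hz (by rwa [hs]) (by rwa [hs]) nxy
    exact caseB hM hxy hx hy' hz' hx1y hx1z hyz y1x y1z z1x z1y rfl he.symm e4

theorem tri (hM : Mn f) {x x1 : V} (h1 : gd f x x1) (h2 : ¬ okE f x x1) (hg : gd f x1 x) :
    False := by
  have hs := hM.cls.symm
  rcases h1 with h1 | ⟨y, z, k1, k2, k3, k4, k5⟩
  · exact h2 (Or.inl h1)
  have hyz : f y z ≠ 0 := fun h => h2 (Or.inr ⟨y, z, k1, k2, k3, k4, k5, h⟩)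
  have dy := hM.d3 y ⟨z, hyz⟩
  have dz := hM.d3 z ⟨y, by rwa [hs]⟩
  by_cases hy : (N f y).card = 3
  · exact tri1 hM k4 k2.symm k3.symm k1 k5 hyz hg hy
  by_cases hz : (N f z).card = 3
  · exact tri1 hM (k4.trans (sw23 _ _ _)) k3.symm k2.symm k1.symm k5.symm (by rwa [hs]) hg hz
  exact hM.E hyz (Or.inl (by omega)) (Or.inl (by omega))

theorem no_Mn (hM : Mn f) : False := by
  obtain ⟨u, v, huv, h1, h2⟩ := good_edge hM
  by_cases a : okE f u v
  · by_cases b : okE f v u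
    · exact hM.E huv a b
    · exact tri hM h2 b h1
  · exact tri hM h1 a h2

/-- The number of edges (twice). -/
noncomputable def mu (f : V → V → ZMod 3) : ℕ :=
  (Finset.univ.filter (fun p : V × V => f p.1 p.2 ≠ 0)).card

theorem no_Cls_aux : ∀ (n : ℕ) (m : ℕ) (f : V → V → ZMod 3), (supp f).card = n → mu f = m →
    ¬ Cls f := by
  intro n
  induction n using Nat.strong_induction_on with
  | _ n ihn =>
    intro m
    induction m using Nat.strong_induction_on with
    | _ m ihm =>
      intro f hn hm hc
      have hmin : ∀ f' : V → V → ZMod 3, Cls f' → (supp f').card < (supp f).card → False :=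
        fun f' h1 h2 => ihn _ (hn ▸ h2) _ f' rfl rfl h1
      have hd3 : ∀ v, sup f v → 3 ≤ (N f v).card := by
        intro v hv
        rcases hc.deg v hv with h | ⟨a, b, h1, h2, h3, h4, h5, h6⟩
        · exact h
        · exfalso
          obtain ⟨f', k1, k2⟩ := suppress hc h1 h2 h3 h4 h5 h6
          exact hmin f' k1 (Finset.card_lt_card k2)
      refine no_Mn (f := f) ⟨hc, hd3, ?_, ?_, ?_⟩
      · intro v w hvw hv hw S hS a b ha h1 h2 h3 h4 h5 h6
        exact conn3 hc hd3 hmin hvw hv hw S hS ha h1 h2 h3 h4 h5 h6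
      · intro f' h1 h2; exact hmin f' h1 (Finset.card_lt_card h2)
      · rintro f' h1 h2 ⟨p, q, h3, h4⟩
        have hsub : supp f' ⊆ supp f := by
          intro v hv
          rw [mem_supp] at *
          obtain ⟨q, hq⟩ := hv; exact ⟨q, h2 v q hq⟩
        rcases (Finset.card_le_card hsub).lt_or_eq with h | h
        · exact hmin f' h1 h
        · refine ihm (mu f') ?_ f' (h.trans hn) rfl h1
          rw [← hm]
          apply Finset.card_lt_card
          rw [Finset.ssubset_iff_of_subset]
          · exact ⟨(p, q), by simpa using h3, by simpa using h4⟩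
          · intro r hr
            simp only [Finset.mem_filter, Finset.mem_univ, true_and] at *
            exact h2 _ _ hr

theorem no_Cls (f : V → V → ZMod 3) : ¬ Cls f := no_Cls_aux _ _ f rfl rfl

/-! ### Back to graphs -/

theorem pa_walk {G : SimpleGraph V} (hf : ∀ u v, f u v ≠ 0 → G.Adj u v ∧ f u v = 1) {a b : V}
    {U : Finset V} {s : ZMod 3} (h : Pa f a b U s) :
    ∃ p : G.Walk a b, p.IsPath ∧ (∀ z, z ∈ p.support ↔ z ∈ U) ∧ (p.length : ZMod 3) = s := by
  induction h with
  | one a => exact ⟨SimpleGraph.Walk.nil, by simp, by simp, by simp⟩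
  | @cons a b c U s h hU p ih =>
    obtain ⟨p, h1, h2, h3⟩ := ih
    obtain ⟨k1, k2⟩ := hf a b h
    refine ⟨SimpleGraph.Walk.cons k1 p, ?_, ?_, ?_⟩
    · rw [SimpleGraph.Walk.cons_isPath_iff]; exact ⟨h1, by rwa [h2]⟩
    · intro z; rw [SimpleGraph.Walk.support_cons, List.mem_cons, Finset.mem_insert, h2]
    · rw [SimpleGraph.Walk.length_cons, Nat.cast_add, h3, k2]; push_cast; ring

theorem zb_cycle {G : SimpleGraph V} (hf : ∀ u v, f u v ≠ 0 → G.Adj u v ∧ f u v = 1) {v : V}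
    {W : Finset V} (h : ZB f v W) : ∃ (u : V) (c : G.Walk u u), c.IsCycle ∧ 3 ∣ c.length := by
  obtain ⟨a, b, s, hp, hv, hab, hva, hbv, h0⟩ := h
  obtain ⟨p, h1, h2, h3⟩ := pa_walk hf hp
  obtain ⟨k1, k2⟩ := hf _ _ hva
  obtain ⟨l1, l2⟩ := hf _ _ hbv
  have hvp : v ∉ p.support := by rwa [h2]
  refine ⟨v, SimpleGraph.Walk.cons k1 (p.concat l1), ?_, ?_⟩
  · rw [SimpleGraph.Walk.cons_isCycle_iff]
    refine ⟨h1.concat hvp l1, ?_⟩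
    rw [SimpleGraph.Walk.edges_concat, List.concat_eq_append, List.mem_append, not_or]
    constructor
    · intro h; exact hvp (p.fst_mem_support_of_mem_edges h)
    · simp only [List.mem_singleton, Sym2.eq_iff, not_or, not_and]
      exact ⟨fun h => absurd h l1.ne', fun _ => hab⟩
  · rw [← ZMod.natCast_eq_zero_iff, SimpleGraph.Walk.length_cons,
      SimpleGraph.Walk.length_concat]
    push_cast
    rw [h3, ← h0, k2, l2]; ring

theorem main (G : SimpleGraph V) [DecidableRel G.Adj]
    (h2conn : 3 ≤ Fintype.card V ∧
      ∀ v a b : V, a ≠ v → b ≠ v →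
        (SimpleGraph.fromRel fun c d => G.Adj c d ∧ c ≠ v ∧ d ≠ v).Reachable a b)
    (hno : ¬ ∃ (u : V) (c : G.Walk u u), c.IsCycle ∧ 3 ∣ c.length)
    (hadj : ∀ u v, G.degree u = 2 → G.degree v = 2 → ¬ G.Adj u v)
    (htw : ∀ u v, u ≠ v → G.degree u = 2 → G.degree v = 2 → G.neighborSet u ≠ G.neighborSet v) :
    False := by
  obtain ⟨hcard, hconn⟩ := h2conn
  let f : V → V → ZMod 3 := fun u v => if G.Adj u v then 1 else 0
  have fadj : ∀ u v, f u v ≠ 0 ↔ G.Adj u v := by intro u v; simp [f]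
  have f1 : ∀ u v, G.Adj u v → f u v = 1 := by intro u v h; simp [f, h]
  have fs : ∀ u v, f u v = f v u := by intro u v; simp [f, G.adj_comm]
  have fd : ∀ u, f u u = 0 := by intro u; simp [f]
  clear_value f
  have hN : ∀ v, N f v = G.neighborFinset v := by
    intro v; ext q; rw [mem_N, fadj, SimpleGraph.mem_neighborFinset]
  have hNc : ∀ v, (N f v).card = G.degree v := by
    intro v; rw [hN, SimpleGraph.card_neighborFinset_eq_degree]
  have hC : ∀ w (S : V → Prop), (∀ p q, p ≠ w → q ≠ w → S p → f p q ≠ 0 → S q) →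
      ∀ a b, S a → a ≠ w → b ≠ w → S b := by
    intro w S hS a b ha haw hbw
    obtain ⟨p⟩ := hconn w a b haw hbw
    clear hbw
    induction p with
    | nil => exact ha
    | @cons a c b h p ih =>
      rw [SimpleGraph.fromRel_adj] at h
      have hac : G.Adj a c ∧ c ≠ w := by
        rcases h.2 with h | h
        · exact ⟨h.1, h.2.2⟩
        · exact ⟨h.1.symm, h.2.1⟩
      exact ih (hS a c haw hac.2 ha ((fadj a c).2 hac.1)) hac.2
  have hav : ∀ v w, w ≠ v → ∃ q, f v q ≠ 0 ∧ q ≠ w := by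
    intro v w hwv
    by_contra hc
    push Not at hc
    have : ∃ b, b ∉ ({v, w} : Finset V) := by
      by_contra h
      push Not at h
      have h1 : Finset.univ ⊆ ({v, w} : Finset V) := fun x _ => h x
      have h2 := Finset.card_le_card h1
      have h3 := Finset.card_le_two (a := v) (b := w)
      rw [Finset.card_univ] at h2
      omega
    obtain ⟨b, hb⟩ := this
    simp only [Finset.mem_insert, Finset.mem_singleton, not_or] at hb
    refine hb.1 (hC w (fun x => x = v) ?_ v b rfl hwv.symm hb.2)
    rintro p q hp hq rfl hpq
    exact absurd (hc q hpq) hq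
  have hdeg2 : ∀ v, 2 ≤ (N f v).card := by
    intro v
    have : Nontrivial V := by rw [← Fintype.one_lt_card_iff_nontrivial]; omega
    obtain ⟨w, hw⟩ := exists_ne v
    obtain ⟨q1, h1, _⟩ := hav v w hw
    have hq1 : q1 ≠ v := by rintro rfl; exact h1 (fd _)
    obtain ⟨q2, h2, h3⟩ := hav v q1 hq1
    exact Finset.one_lt_card.2 ⟨q1, mem_N.2 h1, q2, mem_N.2 h2, h3.symm⟩
  refine no_Cls f ⟨fs, fd, ?_, ?_, ?_, ?_, ?_⟩
  · intro v W hz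
    exact hno (zb_cycle (fun u v h => ⟨(fadj u v).1 h, f1 u v ((fadj u v).1 h)⟩) hz)
  · intro w _ S hS a b ha haw hbw _ _
    exact hC w S hS a b ha haw hbw
  · have : Nonempty V := by rw [← Fintype.card_pos_iff]; omega
    obtain ⟨v⟩ := this
    have : (N f v).Nonempty := by rw [← Finset.card_pos]; have := hdeg2 v; omega
    obtain ⟨q, hq⟩ := this
    exact ⟨v, q, mem_N.1 hq⟩
  · intro v _
    by_cases h3 : 3 ≤ (N f v).card
    · exact Or.inl h3
    right
    have h2 : (N f v).card = 2 := by have := hdeg2 v; omega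
    obtain ⟨a, b, hab, hab'⟩ := Finset.card_eq_two.1 h2
    have hva : G.Adj v a := (fadj v a).1 ((N_two hab' a).2 (by simp))
    have hvb : G.Adj v b := (fadj v b).1 ((N_two hab' b).2 (by simp))
    have big : ∀ q, G.Adj v q → 3 ≤ (N f q).card := by
      intro q hq
      by_contra h
      have : (N f q).card = 2 := by have := hdeg2 q; omega
      rw [hNc] at h2 this
      exact hadj v q h2 this hq
    refine ⟨a, b, hab, hab', by rw [f1 _ _ hva, f1 _ _ hvb], ?_, big a hva, big b hvb⟩
    by_contra h
    have h' := (fadj a b).1 h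
    have hz : NZ f := fun v W hz =>
      hno (zb_cycle (fun u v h => ⟨(fadj u v).1 h, f1 u v ((fadj u v).1 h)⟩) hz)
    have hbv := hvb.symm
    apply hz.c3 ((fadj v a).2 hva) h ((fadj b v).2 hbv) hva.ne hab hvb.ne
    rw [f1 _ _ hva, f1 _ _ h', f1 _ _ hbv]; decide
  · intro u v hu huv
    by_contra hne
    refine htw u v hne (by rw [← hNc, hu]) (by rw [← hNc, ← huv, hu]) ?_
    ext q
    rw [SimpleGraph.mem_neighborSet, SimpleGraph.mem_neighborSet, ← fadj, ← fadj, ← mem_N, huv,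
      mem_N]

end

end Gau


/-- Gauthier's structure theorem: every 2-connected graph with no cycle of length
divisible by 3 contains either two adjacent degree-2 vertices or two degree-2 vertices
with the same neighbourhood (2-twins).  Equivalently, a 2-connected graph containing
no two adjacent degree-2 vertices and no 2-twins has a cycle of length divisible
by 3. -/
theorem stmt_19 {V : Type*} [Fintype V] [DecidableEq V] (G : SimpleGraph V)
    [DecidableRel G.Adj]
    (h2conn : 3 ≤ Fintype.card V ∧
      ∀ v a b : V, a ≠ v → b ≠ v →
        (SimpleGraph.fromRel fun c d => G.Adj c d ∧ c ≠ v ∧ d ≠ v).Reachable a b)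
    (hno : ¬ ∃ (u : V) (c : G.Walk u u), c.IsCycle ∧ 3 ∣ c.length) :
    (∃ u v : V, G.degree u = 2 ∧ G.degree v = 2 ∧ G.Adj u v) ∨
    (∃ u v : V, u ≠ v ∧ G.degree u = 2 ∧ G.degree v = 2 ∧
      G.neighborSet u = G.neighborSet v) := by
  by_contra hcon
  push Not at hcon
  obtain ⟨h1, h2⟩ := hcon
  exact Gau.main G h2conn hno h1 h2
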